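/- arXiv:1203.1158 — 6 statements merged into one kernel-verified Lean document; each statement's English description precedes it below -/
import Mathlib

section
/- There exist a constant c > 0 and infinitely many positive integers n such that for each such n there is a connected graph G on n vertices with h(G) ≤ n/4 − c·log log n. -/
open Finset

/-- The multiset of pairwise distances between distinct vertices of `S` in `G`
(one entry for each unordered pair of distinct vertices of `S`). -/
noncomputable def distMultiset {V : Type*} (G : SimpleGraph V) (S : Finset V) : Multiset ℕ :=
  letI := Classical.decEq V
  (S.sym2.filter fun p => ¬ p.IsDiag).val.map
    (Sym2.lift ⟨fun a b => G.dist a b, fun _ _ => SimpleGraph.dist_comm⟩)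

/-- Two disjoint vertex sets are homometric if their distance multisets coincide. -/
def Homometric {V : Type*} (G : SimpleGraph V) (S₁ S₂ : Finset V) : Prop :=
  Disjoint S₁ S₂ ∧ distMultiset G S₁ = distMultiset G S₂

/-- `h(G)`: the largest `h` such that `G` contains two disjoint homometric sets of
size `h` each. -/
noncomputable def homNumber {V : Type*} (G : SimpleGraph V) : ℕ :=
  sSup {h : ℕ | ∃ S₁ S₂ : Finset V, Homometric G S₁ S₂ ∧ S₁.card = h ∧ S₂.card = h}


namespace Homo

lemma dist_eq_of {V : Type*} [Nonempty V] (G : SimpleGraph V) (d : V → V → ℕ)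
    (h0 : ∀ u, d u u = 0)
    (h1 : ∀ u v w, G.Adj v w → d u w ≤ d u v + 1)
    (h2 : ∀ u v, u ≠ v → ∃ w, G.Adj w v ∧ d u v = d u w + 1) :
    G.Connected ∧ ∀ u v, G.dist u v = d u v := by
  have key : ∀ n u v, d u v = n → ∃ p : G.Walk u v, p.length = n := by
    intro n
    induction n with
    | zero =>
      intro u v h
      by_cases huv : u = v
      · subst huv
        exact ⟨SimpleGraph.Walk.nil, rfl⟩
      · obtain ⟨w, _, hw⟩ := h2 u v huv
        omega
    | succ n ih =>
      intro u v h
      have huv : u ≠ v := by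
        rintro rfl
        rw [h0] at h
        omega
      obtain ⟨w, hadj, hw⟩ := h2 u v huv
      obtain ⟨p, hp⟩ := ih u w (by omega)
      refine ⟨p.append (SimpleGraph.Walk.cons hadj SimpleGraph.Walk.nil), ?_⟩
      simp [hp]
  have low : ∀ x u v, ∀ p : G.Walk u v, d x v ≤ d x u + p.length := by
    intro x u v p
    induction p with
    | nil => simp
    | cons h p ih =>
      have := h1 x _ _ h
      simp only [SimpleGraph.Walk.length_cons]
      omega
  have hc : G.Connected := by
    rw [SimpleGraph.connected_iff]
    refine ⟨fun u v => ?_, inferInstance⟩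
    obtain ⟨p, _⟩ := key _ u v rfl
    exact ⟨p⟩
  refine ⟨hc, fun u v => ?_⟩
  apply le_antisymm
  · obtain ⟨p, hp⟩ := key _ u v rfl
    rw [← hp]
    exact SimpleGraph.dist_le p
  · obtain ⟨p, hp⟩ := hc.exists_walk_length_eq_dist u v
    have := low u u v p
    rw [h0] at this
    omega

/-- number of ordered pairs at distance `t`. -/
noncomputable def cnt {V : Type*} (G : SimpleGraph V) (S : Finset V) (t : ℕ) : ℕ :=
  ((S ×ˢ S).filter fun p => G.dist p.1 p.2 = t).card

lemma cnt_eq {V : Type*} (G : SimpleGraph V) (S : Finset V) (t : ℕ) (ht : t ≠ 0) :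
    cnt G S t = 2 * (distMultiset G S).count t := by
  classical
  unfold cnt distMultiset
  rw [Multiset.count_map]
  have e : ∀ (P : Sym2 V → Prop) (i1 : DecidablePred P) (F : Finset (Sym2 V)),
    (Multiset.filter P F.val).card = (F.filter P).card := by
      intros; rfl
  rw [e]
  rw [Finset.card_eq_sum_card_fiberwise (f := fun p : V × V => s(p.1, p.2))
    (t := (S.sym2.filter fun p => ¬ p.IsDiag).filter
      (fun q => t = (Sym2.lift ⟨fun a b => G.dist a b, fun _ _ => SimpleGraph.dist_comm⟩) q))]
  · rw [Finset.sum_const_nat (m := 2)]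
    · rw [mul_comm]
    · intro q hq
      induction q with | _ a b =>
      simp only [Finset.mem_filter, Finset.mk_mem_sym2_iff, Sym2.mk_isDiag_iff, Sym2.lift_mk] at hq
      obtain ⟨⟨⟨ha, hb⟩, hab⟩, hd⟩ := hq
      rw [Finset.card_eq_two]
      refine ⟨(a, b), (b, a), by simp [hab], ?_⟩
      ext ⟨x, y⟩
      simp only [Finset.mem_filter, Finset.mem_product, Finset.mem_insert, Finset.mem_singleton,
        Sym2.eq_iff, Prod.mk.injEq]
      constructor
      · rintro ⟨_, h⟩
        exact h
      · rintro (⟨rfl, rfl⟩ | ⟨rfl, rfl⟩)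
        · simp [ha, hb, hd]
        · simp [ha, hb, hd, SimpleGraph.dist_comm]
  · rintro ⟨x, y⟩ h
    simp only [Finset.coe_filter, Finset.mem_product, Set.mem_ofPred_eq] at h
    simp only [Finset.coe_filter, Set.mem_ofPred_eq, Finset.mem_filter, Finset.mk_mem_sym2_iff, Sym2.mk_isDiag_iff, Sym2.lift_mk]
    refine ⟨⟨h.1, ?_⟩, h.2.symm⟩
    rintro rfl
    simp at h
    exact ht h.2.symm

lemma cnt_eq_of {V : Type*} {G : SimpleGraph V} {S T : Finset V} (h : Homometric G S T)
    (t : ℕ) (ht : t ≠ 0) : cnt G S t = cnt G T t := by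
  rw [cnt_eq G S t ht, cnt_eq G T t ht, h.2]

/-- vertex set -/
abbrev VV (k : ℕ) (m : Fin k → ℕ) (q : ℕ) : Type := (Σ i : Fin k, Fin (m i)) ⊕ Fin (q + 2)

/-- explicit distance -/
def dd {k : ℕ} {m : Fin k → ℕ} {q : ℕ} : VV k m q → VV k m q → ℕ
  | Sum.inl x, Sum.inl y => if x = y then 0 else if x.1 = y.1 then 1 else 2
  | Sum.inl _, Sum.inr j => j.val + 1
  | Sum.inr j, Sum.inl _ => j.val + 1
  | Sum.inr i, Sum.inr j => (i.val - j.val) + (j.val - i.val)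

lemma dd_comm {k : ℕ} {m : Fin k → ℕ} {q : ℕ} (u v : VV k m q) : dd u v = dd v u := by
  rcases u with x | i <;> rcases v with y | j <;> simp only [dd]
  · simp only [eq_comm]
  · omega

lemma dd_self {k : ℕ} {m : Fin k → ℕ} {q : ℕ} (u : VV k m q) : dd u u = 0 := by
  rcases u with x | i <;> simp [dd]

/-- the graph -/
def GG (k : ℕ) (m : Fin k → ℕ) (q : ℕ) : SimpleGraph (VV k m q) where
  Adj u v := dd u v = 1
  symm := ⟨by
    intro u v h
    rw [dd_comm]
    exact h⟩
  loopless := ⟨by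
    intro u h
    rw [dd_self] at h
    omega⟩

lemma GG_dist (k : ℕ) (m : Fin k → ℕ) (q : ℕ) :
    (GG k m q).Connected ∧ ∀ u v, (GG k m q).dist u v = dd u v := by
  have : Nonempty (VV k m q) := ⟨Sum.inr 0⟩
  apply dist_eq_of
  · exact dd_self
  · rintro (x | i) (y | j) (z | l) h <;> simp only [GG, dd] at h ⊢ <;> grind
  · rintro (x | i) (y | j) h
    · have hxy : x ≠ y := fun e => h (by rw [e])
      by_cases hc : x.1 = y.1
      · exact ⟨Sum.inl x, by simp [GG, dd, hxy, hc], by simp [dd, hxy, hc]⟩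
      · exact ⟨Sum.inr 0, by simp [GG, dd], by simp [dd, hxy, hc]⟩
    · by_cases hj : j.val = 0
      · exact ⟨Sum.inl x, by simp [GG, dd, hj], by simp [dd, hj]⟩
      · refine ⟨Sum.inr ⟨j.val - 1, by omega⟩, ?_, ?_⟩ <;> simp only [GG, dd] <;> omega
    · exact ⟨Sum.inr 0, by simp [GG, dd], by simp [dd]⟩
    · have hij : i.val ≠ j.val := fun e => h (by rw [Fin.ext e])
      by_cases hj : i.val < j.val
      · refine ⟨Sum.inr ⟨j.val - 1, by omega⟩, ?_, ?_⟩ <;> simp only [GG, dd] <;> omega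
      · refine ⟨Sum.inr ⟨j.val + 1, by omega⟩, ?_, ?_⟩ <;> simp only [GG, dd] <;> omega

/-- only the first two path vertices are used. -/
def Near {k : ℕ} {m : Fin k → ℕ} {q : ℕ} (S : Finset (VV k m q)) : Prop :=
  ∀ j : Fin (q + 2), Sum.inr j ∈ S → j.val < 2

lemma transfer {k : ℕ} {m : Fin k → ℕ} {q : ℕ} {S T : Finset (VV k m q)}
    (h : ∀ t, t ≠ 0 → cnt (GG k m q) S t = cnt (GG k m q) T t) {u v : VV k m q} (hu : u ∈ S) (hv : v ∈ S)
    (hd : dd u v ≠ 0) : ∃ u' ∈ T, ∃ v' ∈ T, dd u' v' = dd u v := by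
  have h1 : 0 < cnt (GG k m q) S (dd u v) := by
    unfold cnt
    rw [Finset.card_pos]
    exact ⟨(u, v), by simp [hu, hv, (GG_dist k m q).2]⟩
  rw [h _ hd] at h1
  unfold cnt at h1
  rw [Finset.card_pos] at h1
  obtain ⟨⟨a, b⟩, hab⟩ := h1
  simp only [Finset.mem_filter, Finset.mem_product, (GG_dist k m q).2] at hab
  exact ⟨a, hab.1.1, b, hab.1.2, hab.2⟩

lemma ascend {k : ℕ} {m : Fin k → ℕ} {q : ℕ} {S T : Finset (VV k m q)}
    (h : ∀ t, t ≠ 0 → cnt (GG k m q) S t = cnt (GG k m q) T t) (hST : Disjoint S T)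
    {x} (hx : Sum.inl x ∈ S) {j : Fin (q + 2)} (hj : Sum.inr j ∈ S) (hj2 : 2 ≤ j.val) :
    ∃ j' : Fin (q + 2), Sum.inr j' ∈ T ∧ j.val < j'.val := by
  obtain ⟨u, hu, v, hv, huv⟩ := transfer h hx hj (by simp [dd])
  have hn : ∀ i : Fin (q + 2), Sum.inr i ∈ T → i.val ≠ j.val := by
    intro i hi e
    have : i = j := Fin.ext e
    subst this
    exact (Finset.disjoint_left.mp hST hj) hi
  rcases u with a | a <;> rcases v with b | b <;> simp only [dd] at huv
  · split_ifs at huv <;> omega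
  · exact absurd (by omega) (hn b hv)
  · exact absurd (by omega) (hn a hu)
  · by_cases hab : a.val < b.val
    · exact ⟨b, hv, by omega⟩
    · exact ⟨a, hu, by omega⟩

lemma caseA {k : ℕ} {m : Fin k → ℕ} {q : ℕ} {S T : Finset (VV k m q)}
    (h : ∀ t, t ≠ 0 → cnt (GG k m q) S t = cnt (GG k m q) T t) (hST : Disjoint S T)
    {x y} (hx : Sum.inl x ∈ S) (hy : Sum.inl y ∈ T) : Near S := by
  intro j hj
  by_contra hj2
  have : ∀ n : ℕ, ∃ i : Fin (q + 2), Sum.inr i ∈ S ∧ n + 2 ≤ i.val := by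
    intro n
    induction n with
    | zero => exact ⟨j, hj, by omega⟩
    | succ n ih =>
      obtain ⟨i, hi, hi2⟩ := ih
      obtain ⟨i', hi', hi2'⟩ := ascend h hST hx hi (by omega)
      obtain ⟨i'', hi'', hi2''⟩ := ascend (fun t ht => (h t ht).symm) hST.symm hy hi' (by omega)
      exact ⟨i'', hi'', by omega⟩
  obtain ⟨i, _, hi⟩ := this (q + 2)
  omega

lemma caseB {k : ℕ} {m : Fin k → ℕ} {q : ℕ} {S T : Finset (VV k m q)}
    (h : ∀ t, t ≠ 0 → cnt (GG k m q) S t = cnt (GG k m q) T t)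
    (hS : ∀ x, Sum.inl x ∉ S) (h4 : 4 ≤ S.card) {x y} (hx : Sum.inl x ∈ T) (hy : Sum.inl y ∈ T) :
    x = y := by
  classical
  by_contra hxy
  obtain ⟨P, hP⟩ : ∃ P : Finset (Fin (q + 2)), P = univ.filter (fun j => (Sum.inr j : VV k m q) ∈ S) :=
    ⟨_, rfl⟩
  have hmem : ∀ j, j ∈ P ↔ (Sum.inr j : VV k m q) ∈ S := by intro j; simp [hP]
  have hSP : S = P.map ⟨Sum.inr, Sum.inr_injective⟩ := by
    ext (a | a)
    · simp [hS a]
    · simp [hmem]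
  have hPc : 4 ≤ P.card := by rw [hSP, Finset.card_map] at h4; exact h4
  have hne : P.Nonempty := Finset.card_pos.mp (by omega)
  obtain ⟨lo, hlo⟩ : ∃ lo, lo = P.min' hne := ⟨_, rfl⟩
  obtain ⟨hi, hhi⟩ : ∃ hi, hi = P.max' hne := ⟨_, rfl⟩
  have hloP : lo ∈ P := hlo ▸ P.min'_mem hne
  have hhiP : hi ∈ P := hhi ▸ P.max'_mem hne
  have hb : ∀ a ∈ P, lo.val ≤ a.val ∧ a.val ≤ hi.val := by
    intro a ha
    exact ⟨hlo ▸ P.min'_le a ha, hhi ▸ P.le_max' a ha⟩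
  have hD : lo.val + 3 ≤ hi.val := by
    have : P ⊆ Finset.Icc lo hi := by
      intro a ha
      rw [Finset.mem_Icc]
      exact hb a ha
    have := Finset.card_le_card this
    rw [Fin.card_Icc] at this
    omega
  have hmax : ∀ u ∈ S, ∀ v ∈ S, dd u v ≤ hi.val - lo.val := by
    rintro (a | a) ha (b | b) hb'
    · exact absurd ha (hS a)
    · exact absurd ha (hS a)
    · exact absurd hb' (hS b)
    · have h1 := hb a ((hmem a).2 ha)
      have h2 := hb b ((hmem b).2 hb')
      simp only [dd]
      omega
  have hmaxT : ∀ u ∈ T, ∀ v ∈ T, dd u v ≤ hi.val - lo.val := by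
    intro u hu v hv
    by_cases h0 : dd u v = 0
    · omega
    · obtain ⟨u', hu', v', hv', e⟩ := transfer (fun t ht => (h t ht).symm) hu hv h0
      rw [← e]
      exact hmax u' hu' v' hv'
  have hdlh : dd (Sum.inr lo : VV k m q) (Sum.inr hi) = hi.val - lo.val := by
    simp only [dd]
    omega
  obtain ⟨j, hj, hjD⟩ : ∃ j : Fin (q + 2), Sum.inr j ∈ T ∧ j.val + 1 = hi.val - lo.val := by
    obtain ⟨u, hu, v, hv, e⟩ := transfer h ((hmem lo).1 hloP) ((hmem hi).1 hhiP)
      (by rw [hdlh]; omega)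
    rw [hdlh] at e
    rcases u with a | a <;> rcases v with b | b
    · simp only [dd] at e
      split_ifs at e <;> omega
    · exact ⟨b, hv, by simpa only [dd] using e⟩
    · exact ⟨a, hu, by simpa only [dd] using e⟩
    · have h1 := hmaxT _ hx _ hu
      have h2 := hmaxT _ hx _ hv
      simp only [dd] at h1 h2 e
      omega
  have hc := h (hi.val - lo.val) (by omega)
  have hcS : cnt (GG k m q) S (hi.val - lo.val) ≤ 2 := by
    unfold cnt
    have : ((S ×ˢ S).filter fun p => (GG k m q).dist p.1 p.2 = hi.val - lo.val) ⊆
        {(Sum.inr lo, Sum.inr hi), (Sum.inr hi, Sum.inr lo)} := by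
      rintro ⟨a | a, b | b⟩ hab <;>
        simp only [Finset.mem_filter, Finset.mem_product, (GG_dist k m q).2] at hab
      · exact absurd hab.1.1 (hS a)
      · exact absurd hab.1.1 (hS a)
      · exact absurd hab.1.2 (hS b)
      · have h1 := hb a ((hmem a).2 hab.1.1)
        have h2 := hb b ((hmem b).2 hab.1.2)
        have h3 := hab.2
        simp only [dd] at h3
        simp only [Finset.mem_insert, Finset.mem_singleton, Prod.mk.injEq, Sum.inr.injEq, Fin.ext_iff]
        omega
    exact (Finset.card_le_card this).trans Finset.card_le_two
  have hcT : 3 ≤ cnt (GG k m q) T (hi.val - lo.val) := by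
    unfold cnt
    have : {(Sum.inl x, Sum.inr j), (Sum.inr j, Sum.inl x), (Sum.inl y, Sum.inr j)} ⊆
        ((T ×ˢ T).filter fun p => (GG k m q).dist p.1 p.2 = hi.val - lo.val) := by
      intro p hp
      simp only [Finset.mem_insert, Finset.mem_singleton] at hp
      rcases hp with rfl | rfl | rfl <;>
        simp only [Finset.mem_filter, Finset.mem_product, (GG_dist k m q).2, dd] <;>
        simp [hx, hy, hj, hjD]
    refine le_trans ?_ (Finset.card_le_card this)
    rw [Finset.card_eq_three.2 ⟨_, _, _, ?_, ?_, ?_, rfl⟩] <;> simp [hxy]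
  omega

lemma caseB' {k : ℕ} {m : Fin k → ℕ} {q : ℕ} {S T : Finset (VV k m q)}
    (h : ∀ t, t ≠ 0 → cnt (GG k m q) S t = cnt (GG k m q) T t) (hST : Disjoint S T)
    (hS : ∀ x, Sum.inl x ∉ S) (h4 : 4 ≤ S.card) : S.card + T.card ≤ q + 3 := by
  classical
  rw [← Finset.card_union_of_disjoint hST]
  have hL : (T.toLeft).card ≤ 1 := by
    rw [Finset.card_le_one]
    intro a ha b hb
    rw [Finset.mem_toLeft] at ha hb
    exact caseB h hS h4 ha hb
  have : ((S ∪ T).toLeft) ⊆ T.toLeft := by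
    intro a ha
    rw [Finset.mem_toLeft, Finset.mem_union] at ha
    rw [Finset.mem_toLeft]
    exact ha.resolve_left (hS a)
  have h1 := Finset.card_le_card this
  have h2 : ((S ∪ T).toRight).card ≤ q + 2 := by
    simpa using Finset.card_le_univ ((S ∪ T).toRight)
  have h3 := Finset.card_toLeft_add_card_toRight (u := S ∪ T)
  omega

lemma cases_main {k : ℕ} {m : Fin k → ℕ} {q : ℕ} {S T : Finset (VV k m q)}
    (h : ∀ t, t ≠ 0 → cnt (GG k m q) S t = cnt (GG k m q) T t) (hST : Disjoint S T)
    (hc : S.card = T.card) : S.card ≤ 3 ∨ 2 * S.card ≤ q + 3 ∨ (Near S ∧ Near T) := by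
  by_cases h4 : S.card ≤ 3
  · exact Or.inl h4
  right
  by_cases hS : ∀ x, Sum.inl x ∉ S
  · left
    have := caseB' h hST hS (by omega)
    omega
  by_cases hT : ∀ x, Sum.inl x ∉ T
  · left
    have := caseB' (fun t ht => (h t ht).symm) hST.symm hT (by omega)
    omega
  right
  push Not at hS hT
  obtain ⟨x, hx⟩ := hS
  obtain ⟨y, hy⟩ := hT
  exact ⟨caseA h hST hx hy, caseA (fun t ht => (h t ht).symm) hST.symm hy hx⟩

open Classical in
/-- indicator -/
noncomputable def ind {V : Type*} (S : Finset V) (v : V) : ℤ := if v ∈ S then 1 else 0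

lemma ind_sq {V : Type*} (S : Finset V) (v : V) : ind S v * ind S v = ind S v := by
  unfold ind; split_ifs <;> simp

lemma ind_01 {V : Type*} (S : Finset V) (v : V) : ind S v = 0 ∨ ind S v = 1 := by
  unfold ind; split_ifs <;> simp

/-- class count -/
noncomputable def aa {k : ℕ} {m : Fin k → ℕ} {q : ℕ} (S : Finset (VV k m q)) (i : Fin k) : ℤ :=
  ∑ t : Fin (m i), ind S (Sum.inl ⟨i, t⟩)

lemma card_near {k : ℕ} {m : Fin k → ℕ} {q : ℕ} (S : Finset (VV k m q)) (hS : Near S) :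
    (S.card : ℤ) = ∑ i, aa S i + ind S (Sum.inr 0) + ind S (Sum.inr 1) := by
  classical
  have h0 : (S.card : ℤ) = ∑ v, ind S v := by
    unfold ind
    simp
  have hz : ∀ i : Fin q, ind S (Sum.inr i.succ.succ) = 0 := by
    intro i
    unfold ind
    rw [if_neg]
    intro hh
    have := hS _ hh
    simp at this
  rw [h0, Fintype.sum_sum_type, Fintype.sum_sigma, Fin.sum_univ_succ, Fin.sum_univ_succ]
  simp only [hz]
  simp [aa, add_assoc]

lemma cnt_near {k : ℕ} {m : Fin k → ℕ} {q : ℕ} (S : Finset (VV k m q)) (hS : Near S) :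
    (cnt (GG k m q) S 1 : ℤ) = ∑ i, (aa S i + ind S (Sum.inr 0)) * (aa S i + ind S (Sum.inr 0) - 1)
      + 2 * (ind S (Sum.inr 0) * ind S (Sum.inr 1)) := by
  classical
  have h0 : (cnt (GG k m q) S 1 : ℤ) = ∑ u, ∑ v, ind S u * ind S v * (if dd u v = 1 then 1 else 0) := by
    unfold cnt ind
    simp only [(GG_dist k m q).2]
    rw [Finset.card_filter, Finset.sum_product]
    push_cast
    simp only [mul_ite, mul_one, mul_zero]
    rw [← Finset.sum_filter_add_sum_filter_not univ (fun u => u ∈ S)]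
    rw [Finset.sum_congr (s₁ := univ.filter (fun u => u ∉ S)) rfl (g := fun _ => 0)]
    · simp only [Finset.filter_univ_mem, Finset.sum_const_zero, add_zero]
      apply Finset.sum_congr rfl
      intro u hu
      simp only [hu, if_true]
      rw [← Finset.sum_filter (p := fun v => dd u v = 1), ← Finset.sum_filter (p := fun v => dd u v = 1)]
      rw [← Finset.sum_filter (p := fun v => v ∈ S)]
      apply Finset.sum_congr _ (fun _ _ => rfl)
      ext v
      simp [and_comm]
    · intro u hu
      simp at hu
      simp [hu]
  have hz : ∀ i : Fin q, ind S (Sum.inr i.succ.succ) = 0 := by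
    intro i
    unfold ind
    rw [if_neg]
    intro hh
    have := hS _ hh
    simp at this
  have hcl : ∀ (i : Fin k) (t : Fin (m i)),
      ∑ i', ∑ t' : Fin (m i'), ind S (Sum.inl ⟨i, t⟩) * ind S (Sum.inl ⟨i', t'⟩) *
        (if dd (Sum.inl ⟨i, t⟩ : VV k m q) (Sum.inl ⟨i', t'⟩) = 1 then 1 else 0)
      = ind S (Sum.inl ⟨i, t⟩) * aa S i - ind S (Sum.inl ⟨i, t⟩) := by
    intro i t
    rw [Finset.sum_eq_single i]
    · have : ∀ t' : Fin (m i), ind S (Sum.inl ⟨i, t⟩) * ind S (Sum.inl ⟨i, t'⟩) *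
        (if dd (Sum.inl ⟨i, t⟩ : VV k m q) (Sum.inl ⟨i, t'⟩) = 1 then 1 else 0)
        = ind S (Sum.inl ⟨i, t⟩) * ind S (Sum.inl ⟨i, t'⟩)
          - (if t = t' then ind S (Sum.inl ⟨i, t⟩) else 0) := by
        intro t'
        by_cases e : t = t'
        · subst e
          simp [dd, ind_sq]
        · simp [dd, e]
      rw [Finset.sum_congr rfl (fun t' _ => this t'), Finset.sum_sub_distrib, ← Finset.mul_sum]
      simp [aa]
    · intro i' _ hne
      apply Finset.sum_eq_zero
      intro t' _
      have : dd (Sum.inl ⟨i, t⟩ : VV k m q) (Sum.inl ⟨i', t'⟩) ≠ 1 := by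
        simp only [dd]
        have hne' : ¬ (i = i') := fun e => hne e.symm
        rw [if_neg, if_neg]
        · norm_num
        · simpa using hne'
        · intro e
          exact hne' (congrArg Sigma.fst e)
      simp [this]
    · simp
  rw [h0]
  simp only [Fintype.sum_sum_type, Fintype.sum_sigma, Fin.sum_univ_succ, hz, zero_mul, mul_zero,
    Finset.sum_const_zero, add_zero, Finset.sum_add_distrib, hcl]
  have e1 : ∀ (i : Fin k) (t : Fin (m i)), dd (Sum.inl ⟨i, t⟩ : VV k m q) (Sum.inr 0) = 1 := by
    intro i t; simp [dd]
  have e2 : ∀ (i : Fin k) (t : Fin (m i)), dd (Sum.inl ⟨i, t⟩ : VV k m q) (Sum.inr (Fin.succ 0)) = 2 := by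
    intro i t; simp [dd]
  have e3 : dd (Sum.inr 0 : VV k m q) (Sum.inr 0) = 0 := by simp [dd]
  have e4 : dd (Sum.inr 0 : VV k m q) (Sum.inr (Fin.succ 0)) = 1 := by simp [dd]
  have e5 : dd (Sum.inr (Fin.succ 0) : VV k m q) (Sum.inr (Fin.succ 0)) = 0 := by simp [dd]
  simp only [dd_comm (Sum.inr _) (Sum.inl _), dd_comm (Sum.inr (Fin.succ 0)) (Sum.inr 0),
    e1, e2, e3, e4, e5]
  norm_num
  simp only [← Finset.sum_mul, ← Finset.mul_sum]
  have f1 : (∑ i, ∑ t : Fin (m i), ind S (Sum.inl ⟨i, t⟩)) = ∑ i, aa S i := rfl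
  have f2 : ∀ i, (∑ t : Fin (m i), ind S (Sum.inl ⟨i, t⟩)) = aa S i := fun i => rfl
  simp only [f2]
  have f3 : ∀ i, (aa S i + ind S (Sum.inr 0)) * (aa S i + ind S (Sum.inr 0) - 1)
      = aa S i * aa S i - aa S i + 2 * (aa S i * ind S (Sum.inr 0)) := by
    intro i
    linear_combination ind_sq S (Sum.inr 0)
  simp only [f3, Finset.sum_add_distrib, Finset.sum_sub_distrib, ← Finset.mul_sum, ← Finset.sum_mul]
  ring

lemma arith (k : ℕ) (m x y : Fin k → ℤ) (d1 d2 : ℤ) (hd1 : 0 ≤ d1) (hd1' : d1 ≤ 1)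
    (hd2 : 0 ≤ d2) (hd2' : d2 ≤ 1) (hx : ∀ i, 0 ≤ x i) (hy : ∀ i, 0 ≤ y i)
    (hub : ∀ i, x i + y i ≤ m i + 1) (hlb : ∀ i, m i - k + 1 ≤ x i + y i)
    (hm : ∀ i, ∑ j ∈ univ.filter (fun j => j < i), (m j + 1) ^ 2 + k + 2 < m i)
    (heq : ∑ i, x i * (x i - 1) + 2 * d1 = ∑ i, y i * (y i - 1) + 2 * d2) :
    ∀ i, x i = y i := by
  by_contra hcon
  push Not at hcon
  have hne : (univ.filter (fun i => x i ≠ y i)).Nonempty := by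
    obtain ⟨i, hi⟩ := hcon
    exact ⟨i, by simp [hi]⟩
  obtain ⟨i, hi, himax⟩ := Finset.exists_max_image _ (fun i : Fin k => i) hne
  have hi' : x i ≠ y i := by simpa using hi
  have hgt : ∀ j, i < j → x j = y j := by
    intro j hj
    by_contra hne'
    have := himax j (by simp [hne'])
    exact absurd hj (not_lt.mpr this)
  set f : Fin k → ℤ := fun j => x j * (x j - 1) - y j * (y j - 1) with hf
  have hsum : ∑ j, f j = 2 * d2 - 2 * d1 := by
    simp only [hf, Finset.sum_sub_distrib]
    linarith
  have hsplit : ∑ j, f j = ∑ j ∈ univ.filter (fun j => j < i), f j + f i := by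
    rw [← Finset.sum_filter_add_sum_filter_not univ (fun j => j < i)]
    congr 1
    apply Finset.sum_eq_single i
    · intro j hj hji
      have : i < j := by
        simp only [Finset.mem_filter, Finset.mem_univ, true_and, not_lt] at hj
        exact lt_of_le_of_ne hj (Ne.symm hji)
      simp [hf, hgt j this]
    · simp
  have hfb : ∀ j, |f j| ≤ (m j + 1) ^ 2 := by
    intro j
    have h1 := hx j
    have h2 := hy j
    have h3 := hub j
    have p1 : ∀ z : ℤ, 0 ≤ z → 0 ≤ z * (z - 1) := by
      intro z hz
      rcases hz.eq_or_lt with h | h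
      · simp [← h]
      · exact mul_nonneg hz (by omega)
    have q1 := p1 _ h1
    have q2 := p1 _ h2
    rw [abs_le]
    simp only [hf]
    constructor <;> nlinarith
  have hlow : |∑ j ∈ univ.filter (fun j => j < i), f j| ≤
      ∑ j ∈ univ.filter (fun j => j < i), (m j + 1) ^ 2 :=
    (Finset.abs_sum_le_sum_abs _ _).trans (Finset.sum_le_sum (fun j _ => hfb j))
  have hfi : m i - k ≤ |f i| := by
    have e : f i = (x i - y i) * (x i + y i - 1) := by simp only [hf]; ring
    rw [e, abs_mul]
    have h1 : 1 ≤ |x i - y i| := Int.one_le_abs (sub_ne_zero.mpr hi')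
    have h2 : m i - k ≤ |x i + y i - 1| := le_trans (by linarith [hlb i]) (le_abs_self _)
    nlinarith [abs_nonneg (x i + y i - 1)]
  have hmi := hm i
  have : |f i| ≤ |∑ j ∈ univ.filter (fun j => j < i), f j| + 2 := by
    have e : f i = -(∑ j ∈ univ.filter (fun j => j < i), f j) + (2 * d2 - 2 * d1) := by linarith
    rw [e]
    refine (abs_add_le _ _).trans ?_
    rw [abs_neg]
    have : |2 * d2 - 2 * d1| ≤ 2 := by
      rw [abs_le]; constructor <;> linarith
    linarith
  linarith

lemma aa_nonneg {k : ℕ} {m : Fin k → ℕ} {q : ℕ} (S : Finset (VV k m q)) (i : Fin k) :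
    0 ≤ aa S i := by
  apply Finset.sum_nonneg
  intro t _
  rcases ind_01 S (Sum.inl ⟨i, t⟩) with h | h <;> simp [h]

lemma ind_disj {V : Type*} {S T : Finset V} (h : Disjoint S T) (v : V) :
    ind S v + ind T v ≤ 1 := by
  unfold ind
  have : v ∈ S → v ∉ T := fun hv => Finset.disjoint_left.mp h hv
  split_ifs with h1 h2
  · exact absurd h2 (this h1)
  all_goals norm_num

lemma aa_disj {k : ℕ} {m : Fin k → ℕ} {q : ℕ} {S T : Finset (VV k m q)} (h : Disjoint S T)
    (i : Fin k) : aa S i + aa T i ≤ m i := by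
  unfold aa
  rw [← Finset.sum_add_distrib]
  refine (Finset.sum_le_sum (fun t _ => ind_disj h _)).trans ?_
  simp

lemma waste {k : ℕ} {m : Fin k → ℕ} {q : ℕ} {S T : Finset (VV k m q)} (hk : 3 ≤ k)
    (h : cnt (GG k m q) S 1 = cnt (GG k m q) T 1) (hST : Disjoint S T)
    (hc : S.card = T.card) (hS : Near S) (hT : Near T) (hodd : ∀ i, Odd (m i))
    (hm : ∀ i, ∑ j ∈ univ.filter (fun j => j < i), ((m j : ℤ) + 1) ^ 2 + (k : ℤ) + 2 < (m i : ℤ)) :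
    2 * S.card + k ≤ ∑ i, m i + 2 := by
  have cS := card_near S hS
  have cT := card_near T hT
  have nS := cnt_near S hS
  have nT := cnt_near T hT
  have i0 := ind_disj hST (Sum.inr 0)
  have i1 := ind_disj hST (Sum.inr 1)
  have hsub : ∑ i, (aa S i + aa T i) + k ≤ ∑ i, (m i : ℤ) := by
    by_contra hW
    push Not at hW
    have hlb : ∀ i, (m i : ℤ) - k + 1 ≤ aa S i + aa T i := by
      intro i
      by_contra hlt
      push Not at hlt
      have : ∑ j, ((m j : ℤ) - (aa S j + aa T j)) ≥ (m i : ℤ) - (aa S i + aa T i) :=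
        Finset.single_le_sum (f := fun j => (m j : ℤ) - (aa S j + aa T j))
          (fun j _ => by have := aa_disj hST j; linarith) (Finset.mem_univ i)
      rw [Finset.sum_sub_distrib] at this
      linarith
    have key := arith k (fun i => (m i : ℤ)) (fun i => aa S i + ind S (Sum.inr 0))
      (fun i => aa T i + ind T (Sum.inr 0)) (ind S (Sum.inr 0) * ind S (Sum.inr 1))
      (ind T (Sum.inr 0) * ind T (Sum.inr 1))
      (by rcases ind_01 S (Sum.inr 0) with e | e <;> rcases ind_01 S (Sum.inr 1) with e' | e' <;> simp [e, e'])
      (by rcases ind_01 S (Sum.inr 0) with e | e <;> rcases ind_01 S (Sum.inr 1) with e' | e' <;> simp [e, e'])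
      (by rcases ind_01 T (Sum.inr 0) with e | e <;> rcases ind_01 T (Sum.inr 1) with e' | e' <;> simp [e, e'])
      (by rcases ind_01 T (Sum.inr 0) with e | e <;> rcases ind_01 T (Sum.inr 1) with e' | e' <;> simp [e, e'])
      (fun i => by
        have := aa_nonneg S i
        rcases ind_01 S (Sum.inr 0) with e | e <;> simp only [e] <;> linarith)
      (fun i => by
        have := aa_nonneg T i
        rcases ind_01 T (Sum.inr 0) with e | e <;> simp only [e] <;> linarith)
      (fun i => by
        have := aa_disj hST i
        linarith)
      (fun i => by
        have := hlb i
        rcases ind_01 S (Sum.inr 0) with e | e <;> rcases ind_01 T (Sum.inr 0) with e' | e' <;>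
          simp only [e, e'] <;> linarith)
      hm
      (by rw [← nS, ← nT, h])
    have hsum : ∑ i, aa S i + k * ind S (Sum.inr 0) = ∑ i, aa T i + k * ind T (Sum.inr 0) := by
      have := Finset.sum_congr (rfl : (univ : Finset (Fin k)) = univ) (fun i _ => key i)
      simpa [Finset.sum_add_distrib] using this
    have hcc : (S.card : ℤ) = T.card := by rw [hc]
    have hk' : (3 : ℤ) ≤ k := by exact_mod_cast hk
    rcases ind_01 S (Sum.inr 0) with e | e <;> rcases ind_01 T (Sum.inr 0) with e' | e' <;>
      rw [e, e'] at hsum <;> rw [e] at cS i0 key <;> rw [e'] at cT i0 key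
    · have : ∀ i, aa S i + aa T i + 1 ≤ m i := by
        intro i
        have h1 := aa_disj hST i
        have h2 := key i
        obtain ⟨r, hr⟩ := hodd i
        have h3 : (m i : ℤ) = 2 * r + 1 := by exact_mod_cast hr
        omega
      have := Finset.sum_le_sum (s := univ) (fun i _ => this i)
      rw [Finset.sum_add_distrib] at this
      simp only [Finset.sum_const, Finset.card_univ, Fintype.card_fin] at this
      simp at this
      linarith
    · rcases ind_01 S (Sum.inr 1) with e1 | e1 <;> rcases ind_01 T (Sum.inr 1) with e2 | e2 <;>
        rw [e1] at cS <;> rw [e2] at cT <;> linarith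
    · rcases ind_01 S (Sum.inr 1) with e1 | e1 <;> rcases ind_01 T (Sum.inr 1) with e2 | e2 <;>
        rw [e1] at cS <;> rw [e2] at cT <;> linarith
    · linarith
  rw [Finset.sum_add_distrib] at hsub
  have hcc : (S.card : ℤ) = T.card := by rw [hc]
  have : (2 * S.card + k : ℤ) ≤ ∑ i, (m i : ℤ) + 2 := by linarith
  exact_mod_cast this

/-- tower -/
def EE (k i : ℕ) : ℕ := 2 ^ 4 ^ (k + i)

lemma EE_ge (k i : ℕ) (hk : 1 ≤ k) : 16 ≤ EE k i := by
  unfold EE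
  calc 16 = 2 ^ 4 ^ 1 := by norm_num
    _ ≤ 2 ^ 4 ^ (k + i) := by
      apply Nat.pow_le_pow_right (by norm_num)
      apply Nat.pow_le_pow_right (by norm_num)
      omega

lemma EE_tower (k i : ℕ) (hk : 1 ≤ k) :
    ∑ j ∈ Finset.range i, (EE k j + 2) ^ 2 + k + 4 ≤ EE k i := by
  induction i with
  | zero =>
    simp only [Finset.range_zero, Finset.sum_empty, EE, add_zero, zero_add]
    induction k, hk using Nat.le_induction with
    | base => norm_num
    | succ n hn ih =>
      have : 2 ^ 4 ^ (n + 1) = (2 ^ 4 ^ n) ^ 4 := by rw [← pow_mul, pow_succ]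
      rw [this]
      have : 2 ^ 4 ^ n * 2 ≤ (2 ^ 4 ^ n) ^ 4 := by
        generalize 2 ^ 4 ^ n = z at *
        have : 5 ≤ z := by omega
        nlinarith [Nat.pow_le_pow_left this 3]
      omega
  | succ i ih =>
    rw [Finset.sum_range_succ]
    have e : EE k (i + 1) = EE k i ^ 4 := by
      unfold EE
      rw [← pow_mul, ← add_assoc, pow_succ]
    have h16 := EE_ge k i hk
    rw [e]
    generalize EE k i = z at *
    have h2 : 256 ≤ z ^ 2 := by nlinarith
    have h4 : z ^ 4 = z ^ 2 * z ^ 2 := by ring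
    nlinarith

lemma EE_hm (k : ℕ) (hk : 1 ≤ k) (i : Fin k) :
    ∑ j ∈ univ.filter (fun j : Fin k => j < i), (((EE k j + 1 : ℕ) : ℤ) + 1) ^ 2 + (k : ℤ) + 2
      < ((EE k i + 1 : ℕ) : ℤ) := by
  have h := EE_tower k i hk
  have e : ∑ j ∈ univ.filter (fun j : Fin k => j < i), (EE k j + 2) ^ 2
      = ∑ j ∈ Finset.range i, (EE k j + 2) ^ 2 := by
    apply Finset.sum_bij (fun (j : Fin k) _ => (j : ℕ))
    · intro a ha
      simpa using ha
    · intro a _ b _ hab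
      exact Fin.ext hab
    · intro b hb
      rw [Finset.mem_range] at hb
      exact ⟨⟨b, by omega⟩, Finset.mem_filter.2 ⟨Finset.mem_univ _, hb⟩, rfl⟩
    · intros; rfl
  rw [← e] at h
  have h' : (((∑ j ∈ univ.filter (fun j : Fin k => j < i), (EE k j + 2) ^ 2 + k + 4 : ℕ)) : ℤ)
      ≤ (EE k i : ℕ) := by exact_mod_cast h
  push_cast at h' ⊢
  simp only [add_assoc, one_add_one_eq_two] at h' ⊢
  linarith

/-- total size of the clique part -/
def HH (k : ℕ) : ℕ := ∑ i : Fin k, (EE k i + 1)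

lemma HH_le (k : ℕ) (hk : 1 ≤ k) : HH k ≤ EE k k := by
  have h := EE_tower k k hk
  unfold HH
  rw [Fin.sum_univ_eq_sum_range (fun i => EE k i + 1) k]
  have : ∑ i ∈ Finset.range k, (EE k i + 1) ≤ ∑ j ∈ Finset.range k, (EE k j + 2) ^ 2 := by
    apply Finset.sum_le_sum
    intro i _
    nlinarith
  omega

lemma HH_ge (k : ℕ) (hk : 1 ≤ k) : 17 * k ≤ HH k := by
  unfold HH
  calc 17 * k = ∑ i : Fin k, 17 := by simp [mul_comm]
    _ ≤ _ := Finset.sum_le_sum (fun i _ => by have := EE_ge k i hk; omega)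

lemma hom_bound (k : ℕ) (hk : 3 ≤ k) :
    4 * homNumber (GG k (fun i => EE k i + 1) (HH k - k - 1)) + k
      ≤ Fintype.card (VV k (fun i => EE k i + 1) (HH k - k - 1)) + 3 ∧
    Fintype.card (VV k (fun i => EE k i + 1) (HH k - k - 1)) = 2 * HH k - k + 1 := by
  have hge := HH_ge k (by omega)
  have hcard : Fintype.card (VV k (fun i => EE k i + 1) (HH k - k - 1)) = 2 * HH k - k + 1 := by
    simp only [Fintype.card_sum, Fintype.card_sigma, Fintype.card_fin]
    change HH k + _ = _
    omega
  refine ⟨?_, hcard⟩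
  rw [hcard]
  have : homNumber (GG k (fun i => EE k i + 1) (HH k - k - 1)) ≤ (HH k - k + 2) / 2 := by
    unfold homNumber
    apply csSup_le
    · exact ⟨0, ∅, ∅, ⟨by simp, rfl⟩, by simp, by simp⟩
    · rintro h ⟨S, T, hom, hS, hT⟩
      have hc := fun t ht => cnt_eq_of hom t ht
      rcases cases_main hc hom.1 (by omega) with h1 | h1 | ⟨n1, n2⟩
      · omega
      · omega
      · have := waste hk (hc 1 one_ne_zero) hom.1 (by omega) n1 n2 (fun i => by
          apply Even.add_one
          unfold EE
          apply Even.pow_of_ne_zero even_two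
          positivity) (fun i => EE_hm k (by omega) i)
        have e : ∑ i : Fin k, (EE k i + 1) = HH k := rfl
        rw [e] at this
        omega
  omega

lemma loglog (k : ℕ) (hk : 3 ≤ k) :
    Real.log (Real.log ((2 * HH k - k + 1 : ℕ) : ℝ)) ≤ 4 * k := by
  have hge := HH_ge k (by omega)
  have hle := HH_le k (by omega)
  have hn : 2 * HH k - k + 1 ≤ 2 * EE k k := by omega
  have hn3 : 3 ≤ 2 * HH k - k + 1 := by omega
  generalize 2 * HH k - k + 1 = n at *
  have hn3' : (3 : ℝ) ≤ n := by exact_mod_cast hn3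
  have hlogpos : 0 < Real.log n := Real.log_pos (by linarith)
  have h2 : Real.log 2 < 0.7 := lt_trans Real.log_two_lt_d9 (by norm_num)
  have hl : Real.log n ≤ (4 : ℝ) ^ (k + k) := by
    have h1 : Real.log n ≤ Real.log ((2 : ℝ) ^ (4 ^ (k + k) + 1)) := by
      apply Real.log_le_log (by linarith)
      have : (n : ℝ) ≤ ((2 * EE k k : ℕ) : ℝ) := by exact_mod_cast hn
      refine this.trans (le_of_eq ?_)
      unfold EE
      push_cast
      rw [pow_succ]
      ring
    rw [Real.log_pow] at h1
    push_cast at h1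
    have h4 : (4 : ℝ) ≤ 4 ^ (k + k) := by
      calc (4 : ℝ) = 4 ^ 1 := by norm_num
        _ ≤ 4 ^ (k + k) := pow_le_pow_right₀ (by norm_num) (by omega)
    nlinarith
  have h5 : Real.log (Real.log n) ≤ Real.log ((4 : ℝ) ^ (k + k)) := Real.log_le_log hlogpos hl
  rw [Real.log_pow] at h5
  have h6 : Real.log 4 = 2 * Real.log 2 := by
    rw [show (4 : ℝ) = 2 ^ 2 by norm_num, Real.log_pow]; norm_num
  rw [h6] at h5
  push_cast at h5
  have hk0 : (0 : ℝ) ≤ k := Nat.cast_nonneg k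
  nlinarith

end Homo

/-- There exist a constant `c > 0` and infinitely many positive integers `n` such that
for each such `n` there is a connected graph `G` on `n` vertices with
`h(G) ≤ n/4 − c·log log n`. -/
theorem stmt0 :
    ∃ c : ℝ, 0 < c ∧
      {n : ℕ | 0 < n ∧ ∃ (V : Type) (inst : Fintype V) (G : SimpleGraph V),
        G.Connected ∧ @Fintype.card V inst = n ∧
        (homNumber G : ℝ) ≤ (n : ℝ) / 4 - c * Real.log (Real.log n)}.Infinite := by
  refine ⟨1 / 32, by norm_num, ?_⟩
  apply Set.infinite_of_forall_exists_gt
  intro N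
  obtain ⟨k, hk⟩ : ∃ k, k = N + 6 := ⟨_, rfl⟩
  obtain ⟨hb, hcard⟩ := Homo.hom_bound k (by omega)
  have hl := Homo.loglog k (by omega)
  have hge := Homo.HH_ge k (by omega)
  refine ⟨2 * Homo.HH k - k + 1, ⟨by omega, Homo.VV k (fun i => Homo.EE k i + 1) (Homo.HH k - k - 1),
    inferInstance, Homo.GG k (fun i => Homo.EE k i + 1) (Homo.HH k - k - 1),
    (Homo.GG_dist _ _ _).1, hcard, ?_⟩, by omega⟩
  rw [hcard] at hb
  generalize 2 * Homo.HH k - k + 1 = n at *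
  generalize homNumber (Homo.GG k (fun i => Homo.EE k i + 1) (Homo.HH k - k - 1)) = h at *
  have hb' : (4 * h + k : ℝ) ≤ n + 3 := by exact_mod_cast hb
  have hk6 : (6 : ℝ) ≤ k := by
    have : 6 ≤ k := by omega
    exact_mod_cast this
  linarith
end

section
/- Let G be a connected graph on n vertices with diameter d ≥ 2, and let k ≥ 1 be an integer such that C(C(k,2) + d − 1, d − 1) < n − 2k + 2, where C(a,b) denotes the binomial coefficient. Then G contains two disjoint homometric sets of size k each; in particular h(G) ≥ k. -/
open Finset

/-- flip the sign of a label / signed element -/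
def kflip (a : ℕ × Bool) : ℕ × Bool := (a.1, !a.2)

theorem kflip_flip (a : ℕ × Bool) : kflip (kflip a) = a := by simp [kflip]

theorem kflip_inj : Function.Injective kflip := fun a b h => by
  rw [← kflip_flip a, h, kflip_flip]

/-- coboundary mod 2 -/
def kdelta {α : Type*} [DecidableEq α] (f : Multiset α → ZMod 2) (s : Multiset α) : ZMod 2 :=
  (s.map (fun a => f (s.erase a))).sum

theorem kdelta_cons {α : Type*} [DecidableEq α] (f : Multiset α → ZMod 2) (a : α)
    (s : Multiset α) :
    kdelta f (a ::ₘ s) = f s + kdelta (fun c => f (a ::ₘ c)) s := by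
  unfold kdelta
  rw [Multiset.map_cons, Multiset.sum_cons, Multiset.erase_cons_head]
  congr 2
  apply Multiset.map_congr rfl
  intro b hb
  by_cases h : b = a
  · subst h
    simp only [Multiset.erase_cons_head, Multiset.cons_erase hb]
  · rw [Multiset.erase_cons_tail _ (fun h' => h h'.symm)]

/-- positive alternating indicator, levels below `t` -/
def kP : ℕ → Multiset (ℕ × Bool) → ZMod 2
  | 0, s => if s = 0 then 1 else 0
  | t+1, s => kP t s + if (t, decide (s.card % 2 = 1)) ∈ s then
      kP t (s.erase (t, decide (s.card % 2 = 1))) else 0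

theorem kP_vanish : ∀ (t : ℕ) (s : Multiset (ℕ × Bool)) (a : ℕ × Bool), a ∈ s → t ≤ a.1 →
    kP t s = 0
  | 0, s, a, ha, _ => by
    have : s ≠ 0 := by rintro rfl; simp at ha
    simp [kP, this]
  | t+1, s, a, ha, h => by
    rw [kP, kP_vanish t s a ha (by omega)]
    split_ifs with h1
    · rw [kP_vanish t _ a _ (by omega), add_zero]
      refine (Multiset.mem_erase_of_ne ?_).2 ha
      rintro rfl
      simp at h
    · simp

theorem kP_card : ∀ (t : ℕ) (s : Multiset (ℕ × Bool)), t < s.card → kP t s = 0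
  | 0, s, h => by
    have : s ≠ 0 := by rintro rfl; simp at h
    simp [kP, this]
  | t+1, s, h => by
    rw [kP, kP_card t s (by omega)]
    split_ifs with h1
    · rw [kP_card t _ _, add_zero]
      rw [Multiset.card_erase_of_mem h1]
      simp only [Nat.pred_eq_sub_one]; omega
    · simp

theorem kP_succ_of_lt (t : ℕ) (s : Multiset (ℕ × Bool)) (h : ∀ a ∈ s, a.1 < t) :
    kP (t+1) s = kP t s := by
  rw [kP, if_neg, add_zero]
  intro h'
  exact absurd (h _ h') (by simp)

theorem kP_succ_cons (t : ℕ) (b : Bool) (s : Multiset (ℕ × Bool)) :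
    kP (t+1) ((t, b) ::ₘ s) = if (b = decide (s.card % 2 = 0)) then kP t s else
      if (t, !b) ∈ s then kP (t+1) ((t, b) ::ₘ s) else 0 := by
  split_ifs with h1 h2
  · have : decide ((s.card + 1) % 2 = 1) = b := by rw [h1]; congr 1; simp; omega
    rw [kP, kP_vanish t _ (t,b) (by simp) (by simp), Multiset.card_cons, this]
    simp
  · rfl
  · have : decide ((s.card + 1) % 2 = 1) = !b := by
      have : decide ((s.card + 1) % 2 = 1) = decide (s.card % 2 = 0) := by congr 1; simp; omega
      rw [this]
      revert h1; cases b <;> cases decide (s.card % 2 = 0) <;> simp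
    rw [kP, kP_vanish t _ (t,b) (by simp) (by simp), Multiset.card_cons, this, if_neg]
    · simp
    · simp [h2]

theorem kP_succ_cons_cons (t : ℕ) (b : Bool) (s : Multiset (ℕ × Bool)) :
    kP (t+1) ((t, b) ::ₘ (t, b) ::ₘ s) = 0 := by
  rw [kP, kP_vanish t _ (t,b) (by simp) (by simp), zero_add]
  split_ifs with h
  · by_cases hb : decide (((t, b) ::ₘ (t, b) ::ₘ s).card % 2 = 1) = b
    · rw [hb, Multiset.erase_cons_head]
      exact kP_vanish t _ (t,b) (by simp) (by simp)
    · apply kP_vanish t _ (t,b) _ (by simp)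
      refine (Multiset.mem_erase_of_ne ?_).2 (by simp)
      intro h'
      exact hb (Prod.ext_iff.1 h').2.symm
  · rfl

theorem kdelta_congr {α : Type*} [DecidableEq α] (f g : Multiset α → ZMod 2) (s : Multiset α)
    (h : ∀ a ∈ s, f (s.erase a) = g (s.erase a)) : kdelta f s = kdelta g s := by
  unfold kdelta
  rw [Multiset.map_congr rfl h]

theorem kdelta_smul {α : Type*} [DecidableEq α] (f : Multiset α → ZMod 2) (s : Multiset α)
    (r : ZMod 2) : kdelta (fun c => r * f c) s = r * kdelta f s := by
  unfold kdelta
  rw [Multiset.sum_map_mul_left]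

/-- the main cochain identity -/
theorem kP_delta : ∀ (t : ℕ) (s : Multiset (ℕ × Bool)), (∀ a ∈ s, a.1 < t) →
    (∀ a ∈ s, kflip a ∉ s) → kdelta (kP t) s = kP t s + kP t (s.map kflip)
  | 0, s, h, _ => by
    have : s = 0 := by
      apply Multiset.eq_zero_of_forall_notMem
      intro a ha; exact absurd (h a ha) (by simp)
    subst this
    simp [kdelta, kP]; decide
  | t+1, s, h, hc => by
    by_cases hs : ∃ b, (t, b) ∈ s
    · obtain ⟨b, hb⟩ := hs
      obtain ⟨s, rfl⟩ := Multiset.exists_cons_of_mem hb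
      have hnb : (t, !b) ∉ s := fun h' => hc (t, b) (by simp) (by simp [kflip, h'])
      rw [kdelta_cons, Multiset.map_cons]
      have hfl : kflip (t, b) = (t, !b) := rfl
      rw [hfl]
      by_cases hbs : (t, b) ∈ s
      · obtain ⟨s, rfl⟩ := Multiset.exists_cons_of_mem hbs
        rw [Multiset.map_cons, hfl, kP_succ_cons_cons, kP_succ_cons_cons, kdelta_cons]
        have : kdelta (fun c => kP (t+1) ((t,b) ::ₘ (t,b) ::ₘ c)) s = kdelta (fun c => 0 * 0) s :=
          kdelta_congr _ _ _ (fun a _ => by rw [kP_succ_cons_cons]; rfl)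
        rw [this, kdelta_smul]
        rw [zero_mul, add_zero, add_zero]
        exact CharTwo.add_self_eq_zero _
      · have hlt : ∀ a ∈ s, a.1 < t := by
          rintro ⟨i, c⟩ ha
          have h1 := h (i, c) (by simp [ha])
          by_contra h2
          have : i = t := by simp at h1 h2; omega
          subst this
          cases b <;> cases c <;> simp_all
        have ih := kP_delta t s hlt (fun a ha h' => hc a (by simp [ha]) (by simp [h']))
        have hlt' : ∀ a ∈ s.map kflip, a.1 < t := by
          intro a ha
          obtain ⟨c, hc, rfl⟩ := Multiset.mem_map.1 ha
          exact hlt c hc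
        have nm : ∀ (s' : Multiset (ℕ × Bool)) (b' : Bool), (∀ a ∈ s', a.1 < t) → (t, b') ∉ s' :=
          fun s' b' h1 h2 => absurd (h1 _ h2) (by simp)
        rw [kP_succ_of_lt t s hlt, kP_succ_cons, kP_succ_cons t (!b), if_neg (nm _ _ hlt),
          if_neg (nm _ _ hlt'), Multiset.card_map]
        have : kdelta (fun c => kP (t+1) ((t,b) ::ₘ c)) s =
            kdelta (fun c => (if b = decide (s.card % 2 = 0) then 0 else 1) * kP t c) s := by
          apply kdelta_congr
          intro a ha
          rw [kP_succ_cons, if_neg (nm _ _ (fun c hc => hlt c (Multiset.mem_of_mem_erase hc))),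
            Multiset.card_erase_of_mem ha]
          have hpos : 0 < s.card := Multiset.card_pos_iff_exists_mem.2 ⟨a, ha⟩
          have : decide (s.card.pred % 2 = 0) = !decide (s.card % 2 = 0) := by
            rw [← decide_not]; congr 1; simp only [Nat.pred_eq_sub_one]; simp; omega
          rw [this]
          cases b <;> cases decide (s.card % 2 = 0) <;> simp
        rw [this, kdelta_smul, ih]
        have h2 := CharTwo.add_self_eq_zero (kP t s)
        cases b <;> cases decide (s.card % 2 = 0) <;> simp [← add_assoc, h2]
    · have hlt : ∀ a ∈ s, a.1 < t := by
        rintro ⟨i, c⟩ ha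
        have h1 := h (i, c) ha
        by_contra h2
        have : i = t := by simp at h1 h2; omega
        exact hs ⟨c, this ▸ ha⟩
      have hlt' : ∀ a ∈ s.map kflip, a.1 < t := by
        intro a ha
        obtain ⟨c, hc, rfl⟩ := Multiset.mem_map.1 ha
        exact hlt c hc
      rw [kP_succ_of_lt t s hlt, kP_succ_of_lt t _ hlt', ← kP_delta t s hlt hc]
      exact kdelta_congr _ _ _
        (fun a _ => kP_succ_of_lt t _ (fun c hc => hlt c (Multiset.mem_of_mem_erase hc)))

/-- signed sets -/
abbrev KX := Finset (ℕ × Bool)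

/-- evaluation of a cochain on the barycentric subdivision of the face `x` -/
def kE : ℕ → (Multiset KX → ZMod 2) → KX → ZMod 2
  | 0, f, _ => f 0
  | k+1, f, x => ∑ i ∈ x, kE k (fun c => f (x ::ₘ c)) (x.erase i)

theorem kE_congr : ∀ (k : ℕ) (f g : Multiset KX → ZMod 2) (x : KX), x.card = k →
    (∀ c : Multiset KX, c.card = k → (∀ y ∈ c, y ⊆ x ∧ y.Nonempty) →
      (∀ y ∈ c, ∀ z ∈ c, y ⊆ z ∨ z ⊆ y) → f c = g c) → kE k f x = kE k g x
  | 0, f, g, x, _, h => h 0 (by simp) (by simp) (by simp)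
  | k+1, f, g, x, hx, h => by
    rw [kE, kE]
    refine Finset.sum_congr rfl fun i hi => ?_
    refine kE_congr k _ _ _ (by rw [Finset.card_erase_of_mem hi]; omega) fun c h1 h2 h3 => ?_
    have h2' : ∀ y ∈ c, y ⊆ x := fun y hy => (h2 y hy).1.trans (Finset.erase_subset _ _)
    apply h
    · simp [h1]
    · intro y hy
      rcases Multiset.mem_cons.1 hy with rfl | hy
      · exact ⟨subset_rfl, ⟨i, hi⟩⟩
      · exact ⟨h2' y hy, (h2 y hy).2⟩
    · intro y hy z hz
      rcases Multiset.mem_cons.1 hy with ey | hy' <;> rcases Multiset.mem_cons.1 hz with ez | hz'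
      · exact Or.inl (by rw [ey, ez])
      · exact Or.inr (by rw [ey]; exact h2' z hz')
      · exact Or.inl (by rw [ez]; exact h2' y hy')
      · exact h3 y hy' z hz'

theorem kE_add : ∀ (k : ℕ) (f g : Multiset KX → ZMod 2) (x : KX),
    kE k (fun c => f c + g c) x = kE k f x + kE k g x
  | 0, f, g, x => rfl
  | k+1, f, g, x => by
    rw [kE, kE, kE, ← Finset.sum_add_distrib]
    exact Finset.sum_congr rfl fun i _ => kE_add k _ _ _

theorem kE_zero : ∀ (k : ℕ) (x : KX), kE k (fun _ => 0) x = 0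
  | 0, x => rfl
  | k+1, x => by
    rw [kE]
    exact Finset.sum_eq_zero fun i _ => kE_zero k _

theorem kdd (g : KX → ZMod 2) (x : KX) :
    ∑ i ∈ x, ∑ j ∈ x.erase i, g ((x.erase i).erase j) = 0 := by
  rw [Finset.sum_sigma']
  refine Finset.sum_involution (fun p _ => ⟨p.2, p.1⟩) ?_ ?_ ?_ ?_
  · rintro ⟨i, j⟩ _
    simp only
    rw [Finset.erase_right_comm]
    exact CharTwo.add_self_eq_zero _
  · rintro ⟨i, j⟩ h _ h'
    simp at h h'
    exact h.2.1 h'.1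
  · rintro ⟨i, j⟩ h
    simp at h ⊢
    exact ⟨h.2.2, fun e => h.2.1 e.symm, h.1⟩
  · rintro ⟨i, j⟩ _
    rfl

theorem kE_delta : ∀ (k : ℕ) (f : Multiset KX → ZMod 2) (x : KX), x.card = k + 1 →
    kE (k+1) (kdelta f) x = ∑ i ∈ x, kE k f (x.erase i)
  | 0, f, x, hx => by
    rw [kE]
    refine Finset.sum_congr rfl fun i _ => ?_
    simp [kE, kdelta]
  | k+1, f, x, hx => by
    rw [kE]
    have h : ∀ i ∈ x, kE (k+1) (fun c => kdelta f (x ::ₘ c)) (x.erase i) =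
        kE (k+1) f (x.erase i) +
          ∑ j ∈ x.erase i, kE k (fun c => f (x ::ₘ c)) ((x.erase i).erase j) := by
      intro i hi
      simp only [kdelta_cons]
      rw [kE_add, kE_delta k _ _ (by rw [Finset.card_erase_of_mem hi]; omega)]
    rw [Finset.sum_congr rfl h, Finset.sum_add_distrib,
      kdd (fun y => kE k (fun c => f (x ::ₘ c)) y), add_zero]

/-- antipode on signed sets -/
def kneg (x : KX) : KX := x.image kflip

theorem mem_kneg (x : KX) (a : ℕ × Bool) : a ∈ kneg x ↔ kflip a ∈ x := by
  unfold kneg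
  constructor
  · intro h
    obtain ⟨b, hb, rfl⟩ := Finset.mem_image.1 h
    rwa [kflip_flip]
  · intro h
    exact Finset.mem_image.2 ⟨_, h, kflip_flip a⟩

theorem kE_neg : ∀ (k : ℕ) (f : Multiset KX → ZMod 2) (x : KX),
    kE k f (kneg x) = kE k (fun c => f (c.map kneg)) x
  | 0, f, x => by simp [kE]
  | k+1, f, x => by
    rw [kE, kE]
    conv_lhs => rw [show kneg x = x.image kflip from rfl]
    rw [Finset.sum_image (fun a _ b _ h => kflip_inj h)]
    refine Finset.sum_congr rfl fun i _ => ?_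
    rw [← Finset.image_erase kflip_inj]
    rw [show (x.erase i).image kflip = kneg (x.erase i) from rfl, kE_neg k]
    simp only [Multiset.map_cons]
    rfl

/-- sum over all full sign vectors on `[p]` -/
def kT : ℕ → (KX → ZMod 2) → ZMod 2
  | 0, g => g ∅
  | p+1, g => kT p (fun x => g (insert (p, true) x) + g (insert (p, false) x))

/-- full sign vectors -/
def kFull : ℕ → KX → Prop
  | 0, x => x = ∅
  | p+1, x => ∃ y b, kFull p y ∧ x = insert (p, b) y

theorem kFull_lt : ∀ (p : ℕ) (x : KX), kFull p x → ∀ a ∈ x, a.1 < p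
  | 0, x, h, a, ha => by rw [kFull] at h; subst h; simp at ha
  | p+1, x, ⟨y, b, hy, e⟩, a, ha => by
    subst e
    rcases Finset.mem_insert.1 ha with rfl | ha
    · simp
    · have := kFull_lt p y hy a ha; omega

theorem kFull_notMem (p : ℕ) (x : KX) (h : kFull p x) (b : Bool) : (p, b) ∉ x :=
  fun h' => absurd (kFull_lt p x h _ h') (by simp)

theorem kFull_card : ∀ (p : ℕ) (x : KX), kFull p x → x.card = p
  | 0, x, h => by rw [kFull] at h; subst h; simp
  | p+1, x, ⟨y, b, hy, e⟩ => by
    subst e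
    rw [Finset.card_insert_of_notMem (kFull_notMem p y hy b), kFull_card p y hy]

theorem kFull_cons : ∀ (p : ℕ) (x : KX), kFull p x → ∀ a ∈ x, kflip a ∉ x
  | 0, x, h, a, ha => by rw [kFull] at h; subst h; simp at ha
  | p+1, x, ⟨y, b, hy, e⟩, a, ha => by
    subst e
    intro h
    have hn := kFull_notMem p y hy
    rcases Finset.mem_insert.1 ha with rfl | ha
    · rcases Finset.mem_insert.1 h with h | h
      · have := (Prod.ext_iff.1 h).2
        simp [kflip] at this
      · exact hn _ h
    · rcases Finset.mem_insert.1 h with h | h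
      · have : a.1 = p := (Prod.ext_iff.1 h).1
        exact absurd (kFull_lt p y hy a ha) (by omega)
      · exact kFull_cons p y hy a ha h

theorem kT_congr : ∀ (p : ℕ) (g g' : KX → ZMod 2), (∀ x, kFull p x → g x = g' x) →
    kT p g = kT p g'
  | 0, g, g', h => h ∅ rfl
  | p+1, g, g', h => by
    rw [kT, kT]
    refine kT_congr p _ _ fun x hx => ?_
    rw [h _ ⟨x, true, hx, rfl⟩, h _ ⟨x, false, hx, rfl⟩]

theorem kT_add : ∀ (p : ℕ) (f g : KX → ZMod 2),
    kT p (fun x => f x + g x) = kT p f + kT p g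
  | 0, f, g => rfl
  | p+1, f, g => by
    rw [kT, kT, kT, ← kT_add]
    exact kT_congr _ _ _ fun x _ => by ring

theorem kT_zero : ∀ (p : ℕ), kT p (fun _ => 0) = 0
  | 0 => rfl
  | p+1 => by rw [kT]; simpa using kT_zero p

theorem kneg_insert (x : KX) (a : ℕ × Bool) : kneg (insert a x) = insert (kflip a) (kneg x) := by
  simp [kneg, Finset.image_insert]

theorem kT_neg : ∀ (p : ℕ) (g : KX → ZMod 2), kT p (fun x => g (kneg x)) = kT p g
  | 0, g => by simp [kT, kneg]
  | p+1, g => by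
    rw [kT, kT, ← kT_neg p (fun x => g (insert (p, true) x) + g (insert (p, false) x))]
    refine kT_congr p _ _ fun x _ => ?_
    rw [kneg_insert, kneg_insert, add_comm]
    rfl

/-- boundary -/
def kD (g : KX → ZMod 2) (x : KX) : ZMod 2 := ∑ i ∈ x, g (x.erase i)

theorem kD_insert (g : KX → ZMod 2) (x : KX) (a : ℕ × Bool) (ha : a ∉ x) :
    kD g (insert a x) = g x + kD (fun y => g (insert a y)) x := by
  unfold kD
  rw [Finset.sum_insert ha, Finset.erase_insert ha]
  congr 1
  refine Finset.sum_congr rfl fun i hi => ?_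
  rw [Finset.erase_insert_of_ne]
  rintro rfl; exact ha hi

theorem kT_D : ∀ (p : ℕ) (g : KX → ZMod 2), kT p (kD g) = 0
  | 0, g => by simp [kT, kD]
  | p+1, g => by
    rw [kT]
    have : ∀ x, kFull p x → kD g (insert (p, true) x) + kD g (insert (p, false) x) =
        kD (fun y => g (insert (p, true) y)) x + kD (fun y => g (insert (p, false) y)) x := by
      intro x hx
      rw [kD_insert _ _ _ (kFull_notMem p x hx _), kD_insert _ _ _ (kFull_notMem p x hx _)]
      have h2 := CharTwo.add_self_eq_zero (g x)
      linear_combination h2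
    rw [kT_congr p _ _ this, kT_add, kT_D p, kT_D p, add_zero]

/-- Octahedral Tucker lemma. -/
theorem ktucker (n m : ℕ) (lam : KX → ℕ × Bool)
    (hm : ∀ x : KX, x.Nonempty → (∀ a ∈ x, a.1 < n) → (∀ a ∈ x, kflip a ∉ x) → (lam x).1 < m)
    (hneg : ∀ x : KX, x.Nonempty → (∀ a ∈ x, a.1 < n) → (∀ a ∈ x, kflip a ∉ x) →
      lam (kneg x) = kflip (lam x))
    (hcomp : ∀ x y : KX, x.Nonempty → (∀ a ∈ y, a.1 < n) → (∀ a ∈ y, kflip a ∉ y) → x ⊆ y →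
      lam x ≠ kflip (lam y)) : n ≤ m := by
  have key : ∀ p ≤ n, kT p (kE p (fun c => kP m (c.map lam))) = 1 := by
    intro p
    induction p with
    | zero =>
      intro _
      simp only [kT, kE, Multiset.map_zero]
      clear hm
      induction m with
      | zero => simp [kP]
      | succ t ih => rw [kP, ih]; simp
    | succ p ih =>
      intro hp
      rw [← ih (by omega), kT, kT_add,
        ← kT_neg p (fun x => kE (p+1) _ (insert (p, false) x)), ← kT_add]
      have : ∀ x, kFull p x →
          kE (p+1) (fun c => kP m (c.map lam)) (insert (p, true) x) +
          kE (p+1) (fun c => kP m (c.map lam)) (insert (p, false) (kneg x)) =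
          kE p (fun c => kP m (c.map lam)) x +
            kD (fun y => kE p (fun c => kP m (c.map lam)) (insert (p, true) y)) x := by
        intro x hx
        have hF : kFull (p+1) (insert (p, true) x) := ⟨x, true, hx, rfl⟩
        rw [← kD_insert _ _ _ (kFull_notMem p x hx _), kD,
          ← kE_delta p _ _ (kFull_card _ _ hF),
          show insert (p, false) (kneg x) = kneg (insert (p, true) x) by rw [kneg_insert]; rfl,
          kE_neg, ← kE_add]
        refine kE_congr _ _ _ _ (kFull_card _ _ hF) fun c _ h2 h3 => ?_
        have hl : ∀ y ∈ c, ∀ a ∈ y, a.1 < n := fun y hy a ha => by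
          have := kFull_lt _ _ hF a ((h2 y hy).1 ha); omega
        have hcn : ∀ y ∈ c, ∀ a ∈ y, kflip a ∉ y := fun y hy a ha h' =>
          kFull_cons _ _ hF a ((h2 y hy).1 ha) ((h2 y hy).1 h')
        have e1 : (c.map kneg).map lam = (c.map lam).map kflip := by
          rw [Multiset.map_map, Multiset.map_map]
          exact Multiset.map_congr rfl fun y hy => hneg y (h2 y hy).2 (hl y hy) (hcn y hy)
        rw [e1, ← kP_delta]
        · unfold kdelta
          rw [Multiset.map_map]
          congr 1
          refine Multiset.map_congr rfl fun y hy => ?_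
          simp only [Function.comp]
          rw [Multiset.map_erase_of_mem lam c hy]
        · intro a ha
          obtain ⟨y, hy, rfl⟩ := Multiset.mem_map.1 ha
          exact hm y (h2 y hy).2 (hl y hy) (hcn y hy)
        · intro a ha ha'
          obtain ⟨y, hy, rfl⟩ := Multiset.mem_map.1 ha
          obtain ⟨z, hz, e⟩ := Multiset.mem_map.1 ha'
          rcases h3 y hy z hz with h | h
          · refine hcomp y z (h2 y hy).2 (hl z hz) (hcn z hz) h ?_
            rw [e, kflip_flip]
          · exact hcomp z y (h2 z hz).2 (hl y hy) (hcn y hy) h e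
      rw [kT_congr p _ _ this, kT_add, kT_D, add_zero]
  by_contra hlt
  have h1 := key n le_rfl
  rw [kT_congr n _ (fun _ => 0), kT_zero] at h1
  · exact absurd h1 (by decide)
  · intro x hx
    rw [← kE_zero n x]
    refine kE_congr _ _ _ _ (kFull_card _ _ hx) fun c h _ _ => ?_
    exact kP_card m _ (by rw [Multiset.card_map]; omega)


open Classical in
/-- Lovász's theorem on Kneser graphs. -/
theorem kkneser {V : Type*} [Fintype V] (k M : ℕ) (hk : 1 ≤ k)
    (col : Finset V → ℕ) (hcol : ∀ S, S.card = k → col S < M)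
    (hM : 2 * k - 2 + M < Fintype.card V) :
    ∃ S T : Finset V, Disjoint S T ∧ S.card = k ∧ T.card = k ∧ col S = col T := by
  by_contra! H
  let e := Fintype.equivFin V
  let part : KX → Bool → Finset V := fun x b => Finset.univ.filter fun v => ((e v : ℕ), b) ∈ x
  let Q : KX → Bool → ℕ → Prop := fun x b c => ∃ S ⊆ part x b, S.card = k ∧ col S = c
  let cm : KX → ℕ := fun x => sInf {c | ∃ b, Q x b c}
  let mi : KX → ℕ := fun x => sInf {i | ∃ b, (i, b) ∈ x}
  let lam : KX → ℕ × Bool := fun x => if x.card ≤ 2 * k - 2 then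
    (x.card - 1, decide ((mi x, true) ∈ x)) else (2 * k - 2 + cm x, decide (Q x true (cm x)))
  have hpart : ∀ x b v, v ∈ part x b ↔ ((e v : ℕ), b) ∈ x := by simp [part]
  have hpneg : ∀ x b, part (kneg x) b = part x (!b) := by
    intro x b; ext v; rw [hpart, hpart, mem_kneg]; rfl
  have hQneg : ∀ x b c, Q (kneg x) b c ↔ Q x (!b) c := by
    intro x b c; simp only [Q, hpneg]
  have hcneg : ∀ x, cm (kneg x) = cm x := by
    intro x
    simp only [cm]
    congr 1
    ext c
    simp only [Set.mem_ofPred_eq, hQneg]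
    constructor
    · rintro ⟨b, h⟩; exact ⟨_, h⟩
    · rintro ⟨b, h⟩; exact ⟨!b, by simpa using h⟩
  have hmneg : ∀ x, mi (kneg x) = mi x := by
    intro x
    simp only [mi]
    congr 1
    ext c
    simp only [Set.mem_ofPred_eq, mem_kneg, kflip]
    constructor
    · rintro ⟨b, h⟩; exact ⟨_, h⟩
    · rintro ⟨b, h⟩; exact ⟨!b, by simpa using h⟩
  have hmmem : ∀ x : KX, x.Nonempty → ∃ b, (mi x, b) ∈ x := by
    rintro x ⟨⟨i, b⟩, h⟩
    exact Nat.sInf_mem (s := {i | ∃ b, (i, b) ∈ x}) ⟨i, b, h⟩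
  have hdisj : ∀ x : KX, (∀ a ∈ x, kflip a ∉ x) → Disjoint (part x true) (part x false) := by
    intro x hx
    rw [Finset.disjoint_left]
    intro v h1 h2
    rw [hpart] at h1 h2
    exact hx _ h1 h2
  have hmono : ∀ x y : KX, x ⊆ y → ∀ b, part x b ⊆ part y b := by
    intro x y h b v hv
    rw [hpart] at hv ⊢
    exact h hv
  have hcard : ∀ x : KX, (∀ a ∈ x, a.1 < Fintype.card V) →
      x.card ≤ (part x true).card + (part x false).card := by
    intro x hx
    have : x ⊆ (part x true).image (fun v => ((e v : ℕ), true)) ∪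
        (part x false).image (fun v => ((e v : ℕ), false)) := by
      rintro ⟨i, b⟩ hi
      have hlt := hx _ hi
      have hv : ((e (e.symm ⟨i, hlt⟩) : Fin _) : ℕ) = i := by simp
      rw [Finset.mem_union, Finset.mem_image, Finset.mem_image]
      cases b
      · right; exact ⟨e.symm ⟨i, hlt⟩, by rw [hpart, hv]; exact hi, by rw [hv]⟩
      · left; exact ⟨e.symm ⟨i, hlt⟩, by rw [hpart, hv]; exact hi, by rw [hv]⟩
    refine (Finset.card_le_card this).trans ((Finset.card_union_le _ _).trans ?_)
    exact Nat.add_le_add Finset.card_image_le Finset.card_image_le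
  have hcmem : ∀ x : KX, (∀ a ∈ x, a.1 < Fintype.card V) → ¬ x.card ≤ 2 * k - 2 →
      ∃ b, Q x b (cm x) := by
    intro x hx hc
    refine Nat.sInf_mem (s := {c | ∃ b, Q x b c}) ?_
    have := hcard x hx
    have : ∃ b, k ≤ (part x b).card := by
      by_contra! h
      have h1 := h true
      have h2 := h false
      omega
    obtain ⟨b, hb⟩ := this
    obtain ⟨S, h1, h2⟩ := Finset.exists_subset_card_eq hb
    exact ⟨col S, b, S, h1, h2, rfl⟩
  have hQQ : ∀ x y : KX, (∀ a ∈ y, kflip a ∉ y) → x ⊆ y → ∀ b c, Q x b c → ¬ Q y (!b) c := by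
    rintro x y hy hxy b c ⟨S, hS, hSk, rfl⟩ ⟨T, hT, hTk, h⟩
    refine H S T ?_ hSk hTk h.symm
    have hd := hdisj y hy
    refine Finset.disjoint_of_subset_left (hS.trans (hmono x y hxy b))
      (Finset.disjoint_of_subset_right hT ?_)
    cases b
    · exact hd.symm
    · exact hd
  have hcn : ∀ x, (kneg x).card = x.card := fun x => Finset.card_image_of_injective _ kflip_inj
  have hfin := ktucker (Fintype.card V) (2 * k - 2 + M) lam ?_ ?_ ?_
  · omega
  · intro x hne hlt hc
    have hpos := hne.card_pos
    simp only [lam]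
    split_ifs with h
    · simp only; omega
    · obtain ⟨b, S, _, h1, h2⟩ := hcmem x hlt h
      have := hcol S h1
      simp only; omega
  · intro x hne hlt hc
    simp only [lam, hcn, hcneg, hmneg, hQneg]
    split_ifs with h
    · obtain ⟨b, hb⟩ := hmmem x hne
      simp only [kflip, mem_kneg]
      congr 1
      have := hc _ hb
      cases b <;> simp_all [kflip]
    · obtain ⟨b, hb⟩ := hcmem x hlt h
      have := hQQ x x hc subset_rfl b _ hb
      simp only [kflip]
      congr 1
      cases b <;> simp_all
  · intro x y hne hlt hc hxy heq
    have hle := Finset.card_le_card hxy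
    have hpos := hne.card_pos
    have hltx : ∀ a ∈ x, a.1 < Fintype.card V := fun a ha => hlt a (hxy ha)
    by_cases hx : x.card ≤ 2 * k - 2 <;> by_cases hy : y.card ≤ 2 * k - 2
    · simp only [lam, if_pos hx, if_pos hy, kflip, Prod.mk.injEq] at heq
      have : x = y := Finset.eq_of_subset_of_card_le hxy (by omega)
      subst this
      simp at heq
    · simp only [lam, if_pos hx, if_neg hy, kflip, Prod.mk.injEq] at heq
      omega
    · omega
    · simp only [lam, if_neg hx, if_neg hy, kflip, Prod.mk.injEq] at heq
      obtain ⟨h1, h2⟩ := heq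
      have h1 : cm x = cm y := by omega
      obtain ⟨b, hb⟩ := hcmem x hltx hx
      obtain ⟨b', hb'⟩ := hcmem y hlt hy
      have k1 := hQQ x y hc hxy b _ hb
      have k2 := hQQ x x (fun a ha h' => hc a (hxy ha) (hxy h')) subset_rfl b _ hb
      rw [h1] at h2 k1 k2 hb
      have k3 := hQQ y y hc subset_rfl b' _ hb'
      cases b <;> cases b' <;> simp_all

theorem kdist_card {V : Type*} (G : SimpleGraph V) (S : Finset V) :
    (distMultiset G S).card = S.card.choose 2 := by
  classical
  unfold distMultiset
  rw [Multiset.card_map]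
  change Finset.card _ = _
  rw [← Sym2.card_image_offDiag]
  congr 1
  ext p
  induction p with | _ a b
  simp [Finset.mem_sym2_iff]
  constructor
  · rintro ⟨⟨h1, h2⟩, h3⟩
    exact ⟨a, b, ⟨h1, h2, h3⟩, Or.inl ⟨rfl, rfl⟩⟩
  · rintro ⟨c, d, ⟨h1, h2, h3⟩, ⟨rfl, rfl⟩ | ⟨rfl, rfl⟩⟩
    · exact ⟨⟨h1, h2⟩, h3⟩
    · exact ⟨⟨h2, h1⟩, fun h => h3 h.symm⟩

theorem kdist_range {V : Type*} [Fintype V] (G : SimpleGraph V) (hG : G.Connected)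
    (S : Finset V) : ∀ a ∈ distMultiset G S, 1 ≤ a ∧ a ≤ G.diam := by
  classical
  intro a ha
  unfold distMultiset at ha
  obtain ⟨p, hp, rfl⟩ := Multiset.mem_map.1 ha
  have := hG.nonempty
  induction p with | _ u v
  have hp := (Finset.mem_filter.1 (Finset.mem_def.2 hp)).2
  have huv : u ≠ v := by simpa using hp
  exact ⟨hG.pos_dist_of_ne huv,
    SimpleGraph.dist_le_diam (SimpleGraph.connected_iff_ediam_ne_top.1 hG)⟩

theorem stmt1_aux {V : Type*} [Fintype V] (G : SimpleGraph V) (hG : G.Connected)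
    (n d k : ℕ) (hn : Fintype.card V = n) (hd : G.diam = d) (hd2 : 2 ≤ d) (hk : 1 ≤ k)
    (hineq : (((k.choose 2 + d - 1).choose (d - 1) : ℤ)) < (n : ℤ) - 2 * k + 2) :
    ∃ S₁ S₂ : Finset V, Homometric G S₁ S₂ ∧ S₁.card = k ∧ S₂.card = k := by
  classical
  have : NeZero d := ⟨by omega⟩
  let C := Sym (Fin d) (k.choose 2)
  have hC : Fintype.card C = (k.choose 2 + d - 1).choose (d - 1) := by
    rw [Sym.card_sym_eq_choose, Fintype.card_fin, add_comm d, ← Nat.choose_symm_of_eq_add]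
    omega
  let φ : ℕ → Fin d := fun a => Fin.ofNat d (a - 1)
  let cs : Finset V → C := fun S =>
    if h : ((distMultiset G S).map φ).card = k.choose 2 then ⟨(distMultiset G S).map φ, h⟩
    else Sym.replicate _ 0
  let ec := Fintype.equivFin C
  obtain ⟨S, T, h1, h2, h3, h4⟩ := kkneser k (Fintype.card C) hk (fun S => (ec (cs S) : ℕ))
    (fun S _ => (ec (cs S)).2) (by rw [hC]; omega)
  refine ⟨S, T, ⟨h1, ?_⟩, h2, h3⟩
  have h5 : cs S = cs T := ec.injective (Fin.ext h4)
  have hS : ((distMultiset G S).map φ).card = k.choose 2 := by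
    rw [Multiset.card_map, kdist_card, h2]
  have hT : ((distMultiset G T).map φ).card = k.choose 2 := by
    rw [Multiset.card_map, kdist_card, h3]
  have h7 : cs S = ⟨(distMultiset G S).map φ, hS⟩ := dif_pos hS
  have h8 : cs T = ⟨(distMultiset G T).map φ, hT⟩ := dif_pos hT
  rw [h7, h8] at h5
  have h6 : (distMultiset G S).map φ = (distMultiset G T).map φ := congrArg Subtype.val h5
  have back : ∀ U : Finset V,
      ((distMultiset G U).map φ).map (fun i : Fin d => (i : ℕ) + 1) = distMultiset G U := by
    intro U
    rw [Multiset.map_map]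
    conv_rhs => rw [← Multiset.map_id (distMultiset G U)]
    refine Multiset.map_congr rfl fun a ha => ?_
    have := kdist_range G hG U a ha
    simp only [φ, Function.comp, Fin.ofNat, id]
    rw [Nat.mod_eq_of_lt (by omega)]
    omega
  rw [← back S, h6, back T]

/-- If `G` is connected on `n` vertices with diameter `d ≥ 2` and
`C(C(k,2)+d−1, d−1) < n − 2k + 2` for some `k ≥ 1`, then `G` contains two disjoint
homometric sets of size `k` each; in particular `h(G) ≥ k`. -/
theorem stmt1 {V : Type*} [Fintype V] (G : SimpleGraph V) (hG : G.Connected)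
    (n d k : ℕ) (hn : Fintype.card V = n) (hd : G.diam = d) (hd2 : 2 ≤ d) (hk : 1 ≤ k)
    (hineq : (((k.choose 2 + d - 1).choose (d - 1) : ℤ)) < (n : ℤ) - 2 * k + 2) :
    (∃ S₁ S₂ : Finset V, Homometric G S₁ S₂ ∧ S₁.card = k ∧ S₂.card = k) ∧
      k ≤ homNumber G := by
  have h := stmt1_aux G hG n d k hn hd hd2 hk hineq
  refine ⟨h, le_csSup ⟨Fintype.card V, ?_⟩ h⟩
  rintro m ⟨S, _, _, hS, _⟩
  rw [← hS]
  exact Finset.card_le_univ S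
end

section
/- For every connected graph G, h(G) ≥ ⌊(diam(G) + 1)/2⌋, where diam(G) is the diameter of G (the two halves of a shortest path realizing the diameter are homometric). -/
open Finset

lemma distMultiset_image {V : Type*} [DecidableEq V] (G : SimpleGraph V) (T : Finset ℕ) (g : ℕ → V)
    (hg : Set.InjOn g T) :
    distMultiset G (T.image g) = (T.sym2.filter fun p => ¬ p.IsDiag).val.map
      (fun p => Sym2.lift ⟨fun a b => G.dist a b, fun _ _ => SimpleGraph.dist_comm⟩ (p.map g)) := by
  classical
  have key : ((T.image g).sym2.filter fun p => ¬ p.IsDiag)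
      = (T.sym2.filter fun p => ¬ p.IsDiag).image (Sym2.map g) := by
    rw [Finset.sym2_image]
    ext p
    simp only [Finset.mem_filter, Finset.mem_image]
    constructor
    · rintro ⟨⟨q, hq, rfl⟩, hd⟩
      refine ⟨q, ⟨hq, ?_⟩, rfl⟩
      induction q with | _ a b =>
      simp at hd ⊢
      rintro rfl
      exact hd rfl
    · rintro ⟨q, ⟨hq, hd⟩, rfl⟩
      refine ⟨⟨q, hq, rfl⟩, ?_⟩
      induction q with | _ a b =>
      simp at hd hq ⊢
      exact fun h => hd (hg hq.1 hq.2 h)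
  have inj : Set.InjOn (Sym2.map g) (T.sym2.filter fun p => ¬ p.IsDiag : Finset (Sym2 ℕ)) := by
    intro p hp q hq h
    induction p with | _ a b =>
    induction q with | _ c d =>
    simp at hp hq h ⊢
    rcases h with ⟨h1, h2⟩ | ⟨h1, h2⟩
    · exact Or.inl ⟨hg hp.1.1 hq.1.1 h1, hg hp.1.2 hq.1.2 h2⟩
    · exact Or.inr ⟨hg hp.1.1 hq.1.2 h1, hg hp.1.2 hq.1.1 h2⟩
  unfold distMultiset
  have key' := congrArg Finset.val key
  rw [Finset.image_val_of_injOn inj] at key'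
  have : ∀ m : Multiset (Sym2 ℕ), m.map
      (fun p => Sym2.lift ⟨fun a b => G.dist a b, fun _ _ => SimpleGraph.dist_comm⟩ (p.map g)) =
      (m.map (Sym2.map g)).map
        (Sym2.lift ⟨fun a b => G.dist a b, fun _ _ => SimpleGraph.dist_comm⟩) := by
    intro m; rw [Multiset.map_map]; rfl
  rw [this, ← key']
  congr!

lemma dist_getVert {V : Type*} (G : SimpleGraph V) (hG : G.Connected) {u v : V}
    (p : G.Walk u v) (hp : p.length = G.dist u v) (i k : ℕ) (h : i + k ≤ p.length) :
    G.dist (p.getVert i) (p.getVert (i + k)) = k := by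
  have up : ∀ i k : ℕ, i + k ≤ p.length → G.dist (p.getVert i) (p.getVert (i + k)) ≤ k := by
    intro i k
    induction k with
    | zero => intro _; simp
    | succ k ih =>
      intro h
      have h1 := ih (by omega)
      have h2 : G.dist (p.getVert (i + k)) (p.getVert (i + k + 1)) = 1 :=
        SimpleGraph.dist_eq_one_iff_adj.2 (p.adj_getVert_succ (by omega))
      have h3 := hG.dist_triangle (u := p.getVert i) (v := p.getVert (i + k))
        (w := p.getVert (i + k + 1))
      rw [← add_assoc]
      omega
  apply le_antisymm (up i k h)
  have h1 := up 0 i (by omega)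
  have h2 := up (i + k) (p.length - (i + k)) (by omega)
  rw [show i + k + (p.length - (i + k)) = p.length by omega, p.getVert_length] at h2
  rw [zero_add, p.getVert_zero] at h1
  have h3 := hG.dist_triangle (u := u) (v := p.getVert i) (w := v)
  have h4 := hG.dist_triangle (u := p.getVert i) (v := p.getVert (i + k)) (w := v)
  omega

/-- For every connected graph `G`, `h(G) ≥ ⌊(diam(G)+1)/2⌋`. -/
theorem stmt2 {V : Type*} [Fintype V] (G : SimpleGraph V) (hG : G.Connected) :
    (G.diam + 1) / 2 ≤ homNumber G := by
  classical
  have := hG.nonempty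
  obtain ⟨u, v, huv⟩ := G.exists_dist_eq_diam
  obtain ⟨p, hp⟩ := hG.exists_walk_length_eq_dist u v
  have D := dist_getVert G hG p hp
  have inj : ∀ i j, i ≤ p.length → j ≤ p.length → p.getVert i = p.getVert j → i = j := by
    intro i j hi hj h
    rcases le_total i j with hij | hij
    · have := D i (j - i) (by omega)
      rw [show i + (j - i) = j by omega, h, SimpleGraph.dist_self] at this
      omega
    · have := D j (i - j) (by omega)
      rw [show j + (i - j) = i by omega, h, SimpleGraph.dist_self] at this
      omega
  set m := (G.diam + 1) / 2 with hm
  have hlen : 2 * m ≤ p.length + 1 := by omega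
  have inj1 : Set.InjOn p.getVert (range m : Finset ℕ) := by
    intro i hi j hj h
    simp at hi hj
    exact inj i j (by omega) (by omega) h
  have inj2 : Set.InjOn (fun i => p.getVert (i + m)) (range m : Finset ℕ) := by
    intro i hi j hj h
    simp at hi hj
    have := inj (i + m) (j + m) (by omega) (by omega) h
    omega
  have bdd : BddAbove {h : ℕ | ∃ S₁ S₂ : Finset V,
      Homometric G S₁ S₂ ∧ S₁.card = h ∧ S₂.card = h} := by
    refine ⟨Fintype.card V, ?_⟩
    rintro h ⟨S₁, S₂, -, rfl, -⟩
    exact Finset.card_le_univ _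
  refine le_csSup bdd ⟨(range m).image p.getVert, (range m).image (fun i => p.getVert (i + m)),
    ⟨?_, ?_⟩, ?_, ?_⟩
  · rw [Finset.disjoint_left]
    intro x hx hy
    simp only [Finset.mem_image, Finset.mem_range] at hx hy
    obtain ⟨i, hi, rfl⟩ := hx
    obtain ⟨j, hj, h⟩ := hy
    have := inj (j + m) i (by omega) (by omega) h
    omega
  · rw [distMultiset_image G _ _ inj1, distMultiset_image G _ _ inj2]
    apply Multiset.map_congr rfl
    intro q hq
    induction q with | _ a b =>
    rw [Finset.mem_val, Finset.mem_filter, Finset.mk_mem_sym2_iff, Finset.mem_range,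
      Finset.mem_range] at hq
    have main : ∀ a b, a ≤ b → b < m → G.dist (p.getVert a) (p.getVert b) =
        G.dist (p.getVert (a + m)) (p.getVert (b + m)) := by
      intro a b hab hb
      have h1 := D a (b - a) (by omega)
      have h2 := D (a + m) (b - a) (by omega)
      rw [show a + (b - a) = b by omega] at h1
      rw [show a + m + (b - a) = b + m by omega] at h2
      rw [h1, h2]
    simp only [Sym2.map_mk, Sym2.lift_mk]
    rcases le_total a b with hab | hab
    · exact main a b hab hq.1.2
    · rw [SimpleGraph.dist_comm, main b a hab hq.1.1, SimpleGraph.dist_comm]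
  · rw [Finset.card_image_of_injOn inj1, Finset.card_range]
  · rw [Finset.card_image_of_injOn inj2, Finset.card_range]
end

section
/- Let G be a connected graph on n vertices with diameter d ≥ 2, and suppose n ≥ d^(2d−2). Then h(G) ≥ (1/2)·n^(1/(2d−2)). -/
open Finset

/-- positive-alternating (for `s = 1`) or negative-alternating (for `s = -1`) label sets -/
def AltSet (s : ℤ) (S : Finset ℤ) : Prop :=
  ∀ x ∈ S, 0 < s * (-1) ^ (#{y ∈ S | y.natAbs < x.natAbs}) * x

lemma altSet_insert (s : ℤ) (S : Finset ℤ) (M : ℤ) (hM : ∀ x ∈ S, x.natAbs < M.natAbs) :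
    AltSet s (insert M S) ↔ AltSet s S ∧ 0 < s * (-1) ^ (#S) * M := by
  have h1 : ∀ x ∈ S, ({y ∈ insert M S | y.natAbs < x.natAbs} : Finset ℤ)
      = {y ∈ S | y.natAbs < x.natAbs} := by
    intro x hx
    ext y
    have := hM x hx
    simp only [mem_filter, mem_insert]
    constructor
    · rintro ⟨rfl | h, h2⟩
      · omega
      · exact ⟨h, h2⟩
    · rintro ⟨h, h2⟩
      exact ⟨Or.inr h, h2⟩
  have h2 : ({y ∈ insert M S | y.natAbs < M.natAbs} : Finset ℤ) = S := by
    ext y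
    simp only [mem_filter, mem_insert]
    constructor
    · rintro ⟨rfl | h, h2⟩
      · omega
      · exact h
    · intro h
      exact ⟨Or.inr h, hM y h⟩
  unfold AltSet
  rw [forall_mem_insert, h2, and_comm]
  refine and_congr_left fun _ => forall₂_congr fun x hx => ?_
  rw [h1 x hx]

lemma altSet_injOn (s : ℤ) (S : Finset ℤ) (h : AltSet s S) : Set.InjOn Int.natAbs (S : Set ℤ) := by
  intro x hx y hy hxy
  rcases Int.natAbs_eq_natAbs_iff.1 hxy with h' | h'
  · exact h'
  · have h1 := h x hx
    have h2 := h y hy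
    rw [hxy, h'] at h1
    rw [mul_neg] at h1
    omega

lemma altSet_neg (s : ℤ) (S : Finset ℤ) : AltSet s (S.image (fun x => -x)) ↔ AltSet (-s) S := by
  unfold AltSet
  rw [forall_mem_image]
  refine forall₂_congr fun x hx => ?_
  have : #{y ∈ S.image (fun x => -x) | y.natAbs < (-x).natAbs} = #{y ∈ S | y.natAbs < x.natAbs} := by
    rw [filter_image, card_image_of_injective _ neg_injective]
    simp
  rw [this]
  ring_nf

open Classical in
noncomputable def ind (p : Prop) : ZMod 2 := if p then 1 else 0

lemma ind_true {p : Prop} (h : p) : ind p = 1 := by simp [ind, h]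
lemma ind_false {p : Prop} (h : ¬ p) : ind p = 0 := by simp [ind, h]
lemma ind_congr {p q : Prop} (h : p ↔ q) : ind p = ind q := by rw [propext h]
lemma ind_add_self (p : Prop) : ind p + ind p = 0 := CharTwo.add_self_eq_zero _

lemma door_set (S : Finset ℤ) : (∀ x ∈ S, x ≠ 0) → Set.InjOn Int.natAbs (S : Set ℤ) →
    ∑ x ∈ S, ind (AltSet 1 (S.erase x)) = ind (AltSet 1 S) + ind (AltSet (-1) S) := by
  induction S using Finset.induction_on_max_value Int.natAbs with
  | empty =>
    intro _ _
    simp [AltSet, ind_true]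
    rfl
  | insert M S hMS hmax ih =>
    intro h0 hinj
    have hlt : ∀ x ∈ S, x.natAbs < M.natAbs := by
      intro x hx
      refine lt_of_le_of_ne (hmax x hx) fun h => hMS ?_
      have := hinj (by simp [hx]) (by simp) h
      rwa [← this]
    have ih := ih (fun x hx => h0 x (mem_insert_of_mem hx)) (hinj.mono (by simp))
    rw [sum_insert hMS, erase_insert hMS, altSet_insert _ _ _ hlt, altSet_insert _ _ _ hlt]
    have key : ∀ x ∈ S, ind (AltSet 1 ((insert M S).erase x)) =
        ind (AltSet 1 (S.erase x)) * ind (0 < (-1) ^ (#S) * (-M)) := by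
      intro x hx
      have hne : M ≠ x := by rintro rfl; exact hMS hx
      rw [erase_insert_of_ne hne, altSet_insert _ _ _ (fun y hy => hlt y (mem_of_mem_erase hy))]
      have hc : #S = #(S.erase x) + 1 := (card_erase_add_one hx).symm
      have : (0 < 1 * (-1) ^ #(S.erase x) * M) ↔ (0 < (-1) ^ (#S) * (-M)) := by
        rw [hc, pow_succ]; ring_nf
      rw [this]
      by_cases hp : AltSet 1 (S.erase x)
      · by_cases hq : 0 < (-1) ^ (#S) * (-M)
        · rw [ind_true ⟨hp, hq⟩, ind_true hp, ind_true hq, mul_one]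
        · rw [ind_false (fun h => hq h.2), ind_false hq, mul_zero]
      · rw [ind_false (fun h => hp h.1), ind_false hp, zero_mul]
    rw [sum_congr rfl key, ← sum_mul, ih]
    have hM0 : M ≠ 0 := h0 M (mem_insert_self _ _)
    have hd : (0 < (-1) ^ (#S) * M ∧ ¬ 0 < (-1) ^ (#S) * (-M)) ∨
      (¬ 0 < (-1) ^ (#S) * M ∧ 0 < (-1) ^ (#S) * (-M)) := by
      rcases neg_one_pow_eq_or ℤ (#S) with h | h <;> rw [h] <;> omega
    have e1 : (0 < 1 * (-1) ^ (#S) * M) ↔ (0 < (-1) ^ (#S) * M) := by rw [one_mul]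
    have e2 : (0 < -1 * (-1) ^ (#S) * M) ↔ (0 < (-1) ^ (#S) * (-M)) := by ring_nf
    rw [e1, e2]
    rcases hd with ⟨h1, h2⟩ | ⟨h1, h2⟩
    · simp only [h1, h2, and_true, and_false]
      rw [ind_false not_false]; simp
    · simp only [h1, h2, and_true, and_false]
      rw [ind_false not_false, ind_true trivial, mul_one, ← add_assoc, ind_add_self]

/-- door lemma for indexed labels -/
def AltIdx (s : ℤ) (l : ℕ → ℤ) (I : Finset ℕ) : Prop :=
  Set.InjOn l (I : Set ℕ) ∧ AltSet s (I.image l)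

lemma door_idx (l : ℕ → ℤ) (I : Finset ℕ) (hl : ∀ i ∈ I, ∀ j ∈ I, l i ≠ - l j) :
    ∑ j ∈ I, ind (AltIdx 1 l (I.erase j)) = ind (AltIdx 1 l I) + ind (AltIdx (-1) l I) := by
  by_cases hinj : Set.InjOn l (I : Set ℕ)
  · have hS := door_set (I.image l) (by
      intro x hx
      obtain ⟨i, hi, rfl⟩ := mem_image.1 hx
      have := hl i hi i hi
      omega) (by
      intro x hx y hy hxy
      obtain ⟨i, hi, rfl⟩ := mem_image.1 hx
      obtain ⟨j, hj, rfl⟩ := mem_image.1 hy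
      have := hl i hi j hj
      rcases Int.natAbs_eq_natAbs_iff.1 hxy with h' | h'
      · exact h'
      · exact absurd h' this)
    rw [sum_image hinj] at hS
    have h1 : ∀ s, AltIdx s l I ↔ AltSet s (I.image l) := fun s => ⟨fun h => h.2, fun h => ⟨hinj, h⟩⟩
    rw [h1, h1, ← hS]
    refine sum_congr rfl fun j hj => ind_congr ?_
    have : (I.erase j).image l = (I.image l).erase (l j) := by
      ext y
      simp only [mem_image, mem_erase]
      constructor
      · rintro ⟨a, ⟨h1, h2⟩, rfl⟩
        exact ⟨fun h => h1 (hinj h2 hj h), a, h2, rfl⟩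
      · rintro ⟨h1, a, h2, rfl⟩
        exact ⟨a, ⟨fun h => h1 (by rw [h]), h2⟩, rfl⟩
    rw [← this]
    exact ⟨fun h => h.2, fun h => ⟨hinj.mono (by simp), h⟩⟩
  · rw [ind_false (fun h => hinj h.1), ind_false (fun h => hinj h.1), add_zero]
    simp only [Set.InjOn] at hinj
    push Not at hinj
    obtain ⟨i, hi, j, hj, hij, hne⟩ := hinj
    have hi : i ∈ I := hi
    have hj : j ∈ I := hj
    have himg : (I.erase i).image l = (I.erase j).image l := by
      ext y
      simp only [mem_image, mem_erase]
      constructor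
      · rintro ⟨a, ⟨h1, h2⟩, rfl⟩
        by_cases h : a = j
        · exact ⟨i, ⟨hne, hi⟩, by rw [h, hij]⟩
        · exact ⟨a, ⟨h, h2⟩, rfl⟩
      · rintro ⟨a, ⟨h1, h2⟩, rfl⟩
        by_cases h : a = i
        · exact ⟨j, ⟨hne.symm, hj⟩, by rw [h, hij]⟩
        · exact ⟨a, ⟨h, h2⟩, rfl⟩
    rw [← add_sum_erase _ _ hi, ← add_sum_erase _ _ (mem_erase.2 ⟨hne.symm, hj⟩), sum_eq_zero,
      add_zero]
    · have : AltIdx 1 l (I.erase i) ↔ AltIdx 1 l (I.erase j) := by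
        unfold AltIdx
        rw [← card_image_iff, ← card_image_iff, himg, card_erase_of_mem hi, card_erase_of_mem hj]
      rw [this, ind_add_self]
    · intro a ha
      simp only [mem_erase] at ha
      refine ind_false fun h => hne (h.1 ?_ ?_ hij)
      · simp [hi, Ne.symm ha.2.1]
      · simp [hj, Ne.symm ha.1]

/-- facets: a rank permutation and a sign vector -/
abbrev Fct (N : ℕ) := Equiv.Perm (Fin N) × (Fin N → Bool)

def posP {N : ℕ} (f : Fct N) (i : ℕ) : Finset (Fin N) := {x | (f.1 x : ℕ) < i ∧ f.2 x = true}
def negP {N : ℕ} (f : Fct N) (i : ℕ) : Finset (Fin N) := {x | (f.1 x : ℕ) < i ∧ f.2 x = false}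

lemma mem_posP {N : ℕ} {f : Fct N} {i : ℕ} {x : Fin N} :
    x ∈ posP f i ↔ (f.1 x : ℕ) < i ∧ f.2 x = true := by simp [posP]
lemma mem_negP {N : ℕ} {f : Fct N} {i : ℕ} {x : Fin N} :
    x ∈ negP f i ↔ (f.1 x : ℕ) < i ∧ f.2 x = false := by simp [negP]

/-- facets of the sphere spanned by the first `d` coordinates -/
def sph (N d : ℕ) : Finset (Fct N) := {f | ∀ x : Fin N, d ≤ (x : ℕ) → f.1 x = x ∧ f.2 x = true}

lemma mem_sph {N d : ℕ} {f : Fct N} :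
    f ∈ sph N d ↔ ∀ x : Fin N, d ≤ (x : ℕ) → f.1 x = x ∧ f.2 x = true := by
  simp [sph]

/-- antipode -/
def antip {N : ℕ} (d : ℕ) (f : Fct N) : Fct N :=
  (f.1, fun x => if (x : ℕ) < d then !(f.2 x) else f.2 x)

lemma antip_antip {N : ℕ} (d : ℕ) (f : Fct N) : antip d (antip d f) = f := by
  unfold antip
  ext x
  · rfl
  · by_cases h : (x : ℕ) < d <;> simp [h]

lemma antip_mem {N d : ℕ} {f : Fct N} (h : f ∈ sph N d) : antip d f ∈ sph N d := by
  rw [mem_sph] at *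
  intro x hx
  refine ⟨(h x hx).1, ?_⟩
  simp [antip, (h x hx).2, not_lt.2 hx]

lemma rank_lt {N d : ℕ} {f : Fct N} (h : f ∈ sph N d) (x : Fin N) : (f.1 x : ℕ) < d ↔ (x : ℕ) < d := by
  rw [mem_sph] at h
  constructor
  · intro h1
    by_contra h2
    rw [(h x (not_lt.1 h2)).1] at h1
    exact h2 h1
  · intro h1
    by_contra h2
    have := (h (f.1 x) (not_lt.1 h2)).1
    have := f.1.injective this
    rw [this] at h2
    exact h2 h1

lemma antip_pos {N d : ℕ} {f : Fct N} (h : f ∈ sph N d) (i : ℕ) (hi : i ≤ d) :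
    posP (antip d f) i = negP f i := by
  ext x
  rw [mem_posP, mem_negP]
  simp only [antip]
  refine and_congr_right fun h1 => ?_
  have := (rank_lt h x).1 (by omega)
  simp [this]

lemma antip_neg {N d : ℕ} {f : Fct N} (h : f ∈ sph N d) (i : ℕ) (hi : i ≤ d) :
    negP (antip d f) i = posP f i := by
  ext x
  rw [mem_posP, mem_negP]
  simp only [antip]
  refine and_congr_right fun h1 => ?_
  have := (rank_lt h x).1 (by omega)
  simp [this]

/-- swapping ranks `a` and `b` -/
def swapR {N : ℕ} (a b : Fin N) (f : Fct N) : Fct N := (Equiv.swap a b * f.1, f.2)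

lemma swapR_rank {N : ℕ} (a b : Fin N) (hab : (a : ℕ) + 1 = b) (f : Fct N) (x : Fin N) (i : ℕ)
    (hi : i ≠ b) : ((swapR a b f).1 x : ℕ) < i ↔ (f.1 x : ℕ) < i := by
  simp only [swapR, Equiv.Perm.mul_apply]
  rw [Equiv.swap_apply_def]
  split_ifs with h1 h2
  · rw [h1]; omega
  · rw [h2]; omega
  · rfl

lemma swapR_mem {N d : ℕ} (a b : Fin N) (ha : (a : ℕ) < d) (hb : (b : ℕ) < d) {f : Fct N}
    (h : f ∈ sph N d) : swapR a b f ∈ sph N d := by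
  rw [mem_sph] at *
  intro x hx
  refine ⟨?_, (h x hx).2⟩
  simp only [swapR, Equiv.Perm.mul_apply]
  rw [(h x hx).1, Equiv.swap_apply_of_ne_of_ne]
  · rintro rfl; omega
  · rintro rfl; omega

lemma sum_invol {α : Type*} [DecidableEq α] (s : Finset α) (F : α → ZMod 2) (g : α → α)
    (h1 : ∀ a ∈ s, g a ∈ s) (h2 : ∀ a ∈ s, g (g a) = a) (h3 : ∀ a ∈ s, g a ≠ a)
    (h4 : ∀ a ∈ s, F (g a) = F a) : ∑ a ∈ s, F a = 0 :=
  sum_involution (fun a _ => g a) (fun a ha => by rw [h4 a ha]; exact CharTwo.add_self_eq_zero _)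
    (fun a ha _ => h3 a ha) h1 h2

/-- the labels along a facet -/
def lab {N : ℕ} (L : Finset (Fin N) → Finset (Fin N) → ℤ) (f : Fct N) (i : ℕ) : ℤ :=
  L (posP f i) (negP f i)

lemma altIdx_congr {s : ℤ} {l l' : ℕ → ℤ} {I : Finset ℕ} (h : ∀ i ∈ I, l i = l' i) :
    AltIdx s l I ↔ AltIdx s l' I := by
  unfold AltIdx
  rw [image_congr (g := l') (fun i hi => h i hi),
    Set.EqOn.injOn_iff (f₁ := l) (f₂ := l') (fun i hi => h i hi)]

lemma altIdx_neg {s : ℤ} {l l' : ℕ → ℤ} {I : Finset ℕ} (h : ∀ i ∈ I, l i = - l' i) :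
    AltIdx s l I ↔ AltIdx (-s) l' I := by
  rw [altIdx_congr h]
  unfold AltIdx
  have : I.image (fun i => - l' i) = (I.image l').image (fun x => -x) := by
    rw [image_image]; rfl
  rw [this, altSet_neg]
  refine and_congr_left fun _ => ?_
  simp [Set.InjOn]

lemma level_disj {N : ℕ} (f : Fct N) (i : ℕ) : Disjoint (posP f i) (negP f i) := by
  rw [disjoint_left]
  intro x hx hy
  simp only [posP, negP, mem_filter] at hx hy
  rw [hx.2.2] at hy
  simp at hy

lemma level_nonempty {N : ℕ} (f : Fct N) (i : ℕ) (h1 : 1 ≤ i) (hN : 1 ≤ N) :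
    (posP f i ∪ negP f i).Nonempty := by
  refine ⟨f.1.symm ⟨0, hN⟩, ?_⟩
  simp only [posP, negP, mem_union, mem_filter, mem_univ, true_and, Equiv.apply_symm_apply]
  cases f.2 (f.1.symm ⟨0, hN⟩) <;> simp <;> omega

lemma fan_step {N : ℕ} (L : Finset (Fin N) → Finset (Fin N) → ℤ)
    (hanti : ∀ A B, Disjoint A B → (A ∪ B).Nonempty → L B A = - L A B)
    (hcomp : ∀ A B A' B', A ⊆ A' → B ⊆ B' → Disjoint A' B' → (A ∪ B).Nonempty → L A B ≠ - L A' B')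
    (d : ℕ) (hd : d + 1 ≤ N) :
    ∑ f ∈ sph N (d + 1), ind (AltIdx 1 (lab L f) (Icc 1 (d + 1))) =
    ∑ f ∈ sph N d, ind (AltIdx 1 (lab L f) (Icc 1 d)) := by
  classical
  set z : Fin N := ⟨d, hd⟩ with hz
  have hzd : (z : ℕ) = d := rfl
  set B : Finset (Fct N) := {f ∈ sph N (d + 1) | f.2 z = true} with hB
  have hlab : ∀ f : Fct N, ∀ i ∈ Icc 1 (d+1), ∀ j ∈ Icc 1 (d+1), lab L f i ≠ - lab L f j := by
    have aux : ∀ f : Fct N, ∀ i ∈ Icc 1 (d+1), ∀ j ∈ Icc 1 (d+1), i ≤ j → lab L f i ≠ - lab L f j := by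
      intro f i hi j hj hij
      rw [mem_Icc] at hi hj
      refine hcomp _ _ _ _ ?_ ?_ (level_disj _ _) (level_nonempty _ _ hi.1 (by omega))
      · intro x hx
        simp only [posP, mem_filter, mem_univ, true_and] at *
        exact ⟨by omega, hx.2⟩
      · intro x hx
        simp only [negP, mem_filter, mem_univ, true_and] at *
        exact ⟨by omega, hx.2⟩
    intro f i hi j hj
    rcases le_total i j with h | h
    · exact aux f i hi j hj h
    · have := aux f j hj i hi h
      omega
  -- first evaluation
  have e1 : ∑ f ∈ B, ∑ j ∈ Icc 1 (d+1), ind (AltIdx 1 (lab L f) ((Icc 1 (d+1)).erase j)) =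
      ∑ f ∈ sph N (d + 1), ind (AltIdx 1 (lab L f) (Icc 1 (d + 1))) := by
    rw [← sum_filter_add_sum_filter_not (sph N (d+1)) (fun f => f.2 z = true), ← hB]
    rw [sum_congr rfl (fun f _ => door_idx (lab L f) _ (hlab f)), sum_add_distrib]
    congr 1
    refine sum_bij' (fun f _ => antip (d+1) f) (fun f _ => antip (d+1) f) ?_ ?_ ?_ ?_ ?_
    · intro f hf
      rw [hB, mem_filter] at hf
      rw [mem_filter]
      refine ⟨antip_mem hf.1, ?_⟩
      simp [antip, hzd, hf.2]
    · intro f hf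
      rw [mem_filter] at hf
      rw [hB, mem_filter]
      refine ⟨antip_mem hf.1, ?_⟩
      simpa [antip, hzd] using hf.2
    · intro f _; exact antip_antip _ _
    · intro f _; exact antip_antip _ _
    · intro f hf
      rw [hB, mem_filter] at hf
      refine ind_congr (altIdx_neg (s := 1) ?_).symm
      intro i hi
      rw [mem_Icc] at hi
      unfold lab
      rw [antip_pos hf.1 i hi.2, antip_neg hf.1 i hi.2]
      exact hanti _ _ (level_disj _ _) (level_nonempty _ _ hi.1 (by omega))
  rw [← e1, sum_comm]
  have hI : Icc 1 (d+1) = insert (d+1) (Icc 1 d) := by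
    ext i; simp only [mem_Icc, mem_insert]; omega
  have hnot : d + 1 ∉ Icc 1 d := by simp
  have hIe : (Icc 1 (d+1)).erase (d+1) = Icc 1 d := by rw [hI, erase_insert hnot]
  have hz1 : ∀ j ∈ Icc 1 d, ∑ f ∈ B, ind (AltIdx 1 (lab L f) ((Icc 1 (d+1)).erase j)) = 0 := by
    intro j hj
    rw [mem_Icc] at hj
    set a : Fin N := ⟨j - 1, by omega⟩ with ha
    set b : Fin N := ⟨j, by omega⟩ with hb
    have hab : (a : ℕ) + 1 = b := by simp [ha, hb]; omega
    have hne : a ≠ b := by intro h; rw [h] at hab; omega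
    refine sum_invol B _ (swapR a b) ?_ ?_ ?_ ?_
    · intro f hf
      rw [hB, mem_filter] at *
      exact ⟨swapR_mem a b (by simp [ha]; omega) (by simp [hb]; omega) hf.1, hf.2⟩
    · intro f hf
      simp [swapR]
    · intro f hf h
      have h1 : Equiv.swap a b * f.1 = f.1 := congrArg Prod.fst h
      have h2 : Equiv.swap a b = 1 := by simpa using h1
      rw [Equiv.swap_eq_one_iff] at h2
      exact hne h2
    · intro f hf
      refine ind_congr (altIdx_congr ?_)
      intro i hi
      rw [mem_erase] at hi
      unfold lab posP negP
      simp only [swapR_rank a b hab f _ i hi.1]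
      rfl
  rw [← add_sum_erase _ _ (show d + 1 ∈ Icc 1 (d+1) by simp), hIe, sum_eq_zero hz1, add_zero]
  rw [← sum_filter_add_sum_filter_not B (fun f => f.1 z = z)]
  have hS : ({f ∈ B | f.1 z = z} : Finset (Fct N)) = sph N d := by
    ext f
    rw [hB, mem_filter, mem_filter, mem_sph, mem_sph]
    constructor
    · rintro ⟨⟨h1, h2⟩, h3⟩ x hx
      by_cases h : (x : ℕ) = d
      · have : x = z := Fin.ext h
        subst this; exact ⟨h3, h2⟩
      · exact h1 x (by omega)
    · intro h
      exact ⟨⟨fun x hx => h x (by omega), (h z le_rfl).2⟩, (h z le_rfl).1⟩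
  rw [hS]
  convert add_zero _
  refine sum_invol _ _ (fun f => (f.1, Function.update f.2 (f.1.symm z) (!(f.2 (f.1.symm z))))) ?_ ?_ ?_ ?_
  · intro f hf
    rw [mem_filter, hB, mem_filter] at *
    obtain ⟨⟨h1, h2⟩, h3⟩ := hf
    have hne : z ≠ f.1.symm z := by
      intro h; apply h3; conv_lhs => rw [h]
      simp
    refine ⟨⟨?_, ?_⟩, h3⟩
    · have hr := (rank_lt h1 (f.1.symm z)).1 (by simp [hzd])
      rw [mem_sph] at *
      intro x hx
      refine ⟨(h1 x hx).1, ?_⟩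
      have : x ≠ f.1.symm z := by rintro rfl; omega
      simp only [Function.update_of_ne this]
      exact (h1 x hx).2
    · simp only [Function.update_of_ne hne]
      exact h2
  · intro f hf
    simp
  · intro f hf h
    have := congrFun (congrArg Prod.snd h) (f.1.symm z)
    simp at this
  · intro f hf
    refine ind_congr (altIdx_congr ?_)
    intro i hi
    rw [mem_Icc] at hi
    have hx : ∀ x, (f.1 x : ℕ) < i → x ≠ f.1.symm z := by
      rintro x h rfl
      simp at h
      omega
    unfold lab
    congr 1
    · ext x
      simp only [posP, mem_filter, mem_univ, true_and]
      refine and_congr_right fun h => ?_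
      rw [Function.update_of_ne (hx x h)]
    · ext x
      simp only [negP, mem_filter, mem_univ, true_and]
      refine and_congr_right fun h => ?_
      rw [Function.update_of_ne (hx x h)]

lemma fan {N : ℕ} (L : Finset (Fin N) → Finset (Fin N) → ℤ)
    (hanti : ∀ A B, Disjoint A B → (A ∪ B).Nonempty → L B A = - L A B)
    (hcomp : ∀ A B A' B', A ⊆ A' → B ⊆ B' → Disjoint A' B' → (A ∪ B).Nonempty → L A B ≠ - L A' B')
    (d : ℕ) (hd : d ≤ N) :
    ∑ f ∈ sph N d, ind (AltIdx 1 (lab L f) (Icc 1 d)) = 1 := by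
  induction d with
  | zero =>
    have : sph N 0 = {(1, fun _ => true)} := by
      ext f
      rw [mem_sph, mem_singleton]
      constructor
      · intro h
        ext x
        · simp [(h x (Nat.zero_le _)).1]
        · simp [(h x (Nat.zero_le _)).2]
      · rintro rfl
        simp
    rw [this, sum_singleton]
    apply ind_true
    simp [AltIdx, AltSet]
  | succ d ih => rw [fan_step L hanti hcomp d hd, ih (by omega)]

lemma tucker {N m : ℕ} (L : Finset (Fin N) → Finset (Fin N) → ℤ)
    (hanti : ∀ A B, Disjoint A B → (A ∪ B).Nonempty → L B A = - L A B)
    (hcomp : ∀ A B A' B', A ⊆ A' → B ⊆ B' → Disjoint A' B' → (A ∪ B).Nonempty → L A B ≠ - L A' B')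
    (hm : ∀ A B, Disjoint A B → (A ∪ B).Nonempty → (L A B).natAbs ≤ m) : N ≤ m := by
  have h := fan L hanti hcomp N le_rfl
  obtain ⟨f, -, hf⟩ := exists_ne_zero_of_sum_ne_zero (h.trans_ne one_ne_zero)
  have hf : AltIdx 1 (lab L f) (Icc 1 N) := by
    by_contra h'; exact hf (ind_false h')
  have hinj := altSet_injOn _ _ hf.2
  have hc1 : #((Icc 1 N).image (lab L f)) = N := by
    rw [card_image_of_injOn hf.1]; simp
  have hc2 := card_image_of_injOn hinj
  have hsub : ((Icc 1 N).image (lab L f)).image Int.natAbs ⊆ Icc 1 m := by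
    intro y hy
    simp only [mem_image, exists_exists_and_eq_and] at hy
    obtain ⟨i, hi, rfl⟩ := hy
    rw [mem_Icc] at hi
    have hne := level_nonempty f i hi.1 (by omega)
    have h1 := hm _ _ (level_disj f i) hne
    have h2 := hcomp _ _ _ _ (subset_refl _) (subset_refl _) (level_disj f i) hne
    rw [mem_Icc]
    unfold lab
    omega
  have := card_le_card hsub
  rw [hc2, hc1] at this
  simpa using this

section Kneser
open Classical

/-- some `k`-set of colour `c` lies in `A` -/
def HasCol {N : ℕ} (k : ℕ) (col : Finset (Fin N) → ℕ) (A : Finset (Fin N)) (c : ℕ) : Prop :=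
  ∃ F ⊆ A, #F = k ∧ col F = c

noncomputable def sgnSmall {N : ℕ} (A B : Finset (Fin N)) : ℤ :=
  if ∃ x ∈ A, ∀ y ∈ A ∪ B, x ≤ y then 1 else -1

noncomputable def minCol {N : ℕ} (k : ℕ) (col : Finset (Fin N) → ℕ) (A B : Finset (Fin N)) : ℕ :=
  sInf {c | HasCol k col A c ∨ HasCol k col B c}

noncomputable def sgnBig {N : ℕ} (k : ℕ) (col : Finset (Fin N) → ℕ) (A B : Finset (Fin N)) : ℤ :=
  if HasCol k col A (minCol k col A B) then 1 else -1

noncomputable def kLabel {N : ℕ} (k : ℕ) (col : Finset (Fin N) → ℕ) (A B : Finset (Fin N)) : ℤ :=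
  if #A + #B ≤ 2 * k - 2 then sgnSmall A B * (#A + #B : ℕ)
  else sgnBig k col A B * (2 * k - 1 + minCol k col A B : ℕ)

lemma sgnSmall_anti {N : ℕ} (A B : Finset (Fin N)) (hd : Disjoint A B) (hne : (A ∪ B).Nonempty) :
    sgnSmall B A = - sgnSmall A B := by
  have h1 : (∃ x ∈ B, ∀ y ∈ B ∪ A, x ≤ y) ↔ ¬ (∃ x ∈ A, ∀ y ∈ A ∪ B, x ≤ y) := by
    constructor
    · rintro ⟨x, hx, hx'⟩ ⟨y, hy, hy'⟩
      have e : x = y := le_antisymm (hx' y (mem_union_right _ hy)) (hy' x (mem_union_right _ hx))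
      subst e
      exact disjoint_left.1 hd hy hx
    · intro h
      have hmin := min'_mem _ hne
      have hle : ∀ y ∈ A ∪ B, (A ∪ B).min' hne ≤ y := fun y hy => min'_le _ y hy
      rcases mem_union.1 hmin with h' | h'
      · exact absurd ⟨_, h', hle⟩ h
      · exact ⟨_, h', by rwa [union_comm]⟩
  unfold sgnSmall
  by_cases h : ∃ x ∈ A, ∀ y ∈ A ∪ B, x ≤ y
  · rw [if_pos h, if_neg (by rw [h1]; exact not_not.2 h)]
  · rw [if_neg h, if_pos (h1.2 h)]; rfl

lemma sgnSmall_abs {N : ℕ} (A B : Finset (Fin N)) : sgnSmall A B = 1 ∨ sgnSmall A B = -1 := by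
  unfold sgnSmall; split_ifs <;> simp

lemma sgnBig_abs {N : ℕ} (k : ℕ) (col) (A B : Finset (Fin N)) :
    sgnBig k col A B = 1 ∨ sgnBig k col A B = -1 := by
  unfold sgnBig; split_ifs <;> simp

lemma minCol_comm {N : ℕ} (k : ℕ) (col) (A B : Finset (Fin N)) :
    minCol k col B A = minCol k col A B := by
  unfold minCol; congr 1; ext c; exact or_comm

lemma minCol_spec {N : ℕ} (k : ℕ) (col) (A B : Finset (Fin N)) (h : ¬ #A + #B ≤ 2 * k - 2) :
    HasCol k col A (minCol k col A B) ∨ HasCol k col B (minCol k col A B) := by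
  have : ({c | HasCol k col A c ∨ HasCol k col B c} : Set ℕ).Nonempty := by
    rcases (by omega : k ≤ #A ∨ k ≤ #B) with h' | h'
    · obtain ⟨F, h1, h2⟩ := exists_subset_card_eq h'
      exact ⟨col F, Or.inl ⟨F, h1, h2, rfl⟩⟩
    · obtain ⟨F, h1, h2⟩ := exists_subset_card_eq h'
      exact ⟨col F, Or.inr ⟨F, h1, h2, rfl⟩⟩
  exact Nat.sInf_mem this

lemma kneser {N k C : ℕ} (hk : 1 ≤ k) (col : Finset (Fin N) → ℕ) (hcol : ∀ S, #S = k → col S < C)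
    (hN : C + 2 * k - 1 ≤ N) :
    ∃ S T : Finset (Fin N), Disjoint S T ∧ #S = k ∧ #T = k ∧ col S = col T := by
  by_contra hcon
  push Not at hcon
  have hno : ∀ A B : Finset (Fin N), Disjoint A B → ∀ c, HasCol k col A c → ¬ HasCol k col B c := by
    rintro A B hd c ⟨F, hF, hF', hc⟩ ⟨F₂, hF₂, hF₂', hc₂⟩
    exact hcon F F₂ (disjoint_of_subset_left hF (disjoint_of_subset_right hF₂ hd)) hF' hF₂'
      (by rw [hc, hc₂])
  have hmono : ∀ A B : Finset (Fin N), A ⊆ B → ∀ c, HasCol k col A c → HasCol k col B c := by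
    rintro A B hs c ⟨F, hF, h⟩
    exact ⟨F, hF.trans hs, h⟩
  have hClt : ∀ A c, HasCol k col A c → c < C := by
    rintro A c ⟨F, -, h, rfl⟩
    exact hcol F h
  have := tucker (N := N) (m := C + 2 * k - 2) (kLabel k col) ?_ ?_ ?_
  · have hC : 0 < C + 2 * k - 1 := by omega
    omega
  · intro A B hd hne
    unfold kLabel
    rw [add_comm (#B) (#A)]
    by_cases h : #A + #B ≤ 2 * k - 2
    · rw [if_pos h, if_pos h, sgnSmall_anti A B hd hne, neg_mul]
    · rw [if_neg h, if_neg h, minCol_comm k col A B, ← neg_mul]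
      congr 1
      have h1 := minCol_spec k col A B h
      have h2 := hno A B hd (minCol k col A B)
      unfold sgnBig
      rw [minCol_comm k col A B]
      by_cases h3 : HasCol k col A (minCol k col A B)
      · rw [if_pos h3, if_neg (h2 h3)]
      · rw [if_neg h3, if_pos (h1.resolve_left h3)]; rfl
  · intro A B A' B' hA hB hd hne heq
    have hc1 := card_le_card hA
    have hc2 := card_le_card hB
    have hpos : 0 < #A + #B := by
      have := card_pos.2 hne
      have := card_union_le A B
      omega
    unfold kLabel at heq
    have s1 := sgnSmall_abs A B
    have s2 := sgnSmall_abs A' B'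
    have s3 := sgnBig_abs k col A B
    have s4 := sgnBig_abs k col A' B'
    have key1 : ∀ (s t : ℤ) (a b : ℕ), (s = 1 ∨ s = -1) → (t = 1 ∨ t = -1) → 0 < a →
        s * a = -(t * b) → a = b ∧ s = -t := by
      rintro s t a b (rfl | rfl) (rfl | rfl) h h2 <;> constructor <;> omega
    by_cases h : #A + #B ≤ 2 * k - 2
    · by_cases h' : #A' + #B' ≤ 2 * k - 2
      · rw [if_pos h, if_pos h'] at heq
        obtain ⟨h3, h4⟩ := key1 _ _ _ _ s1 s2 hpos heq
        have eA := eq_of_subset_of_card_le hA (by omega)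
        have eB := eq_of_subset_of_card_le hB (by omega)
        subst eA eB
        omega
      · rw [if_pos h, if_neg h'] at heq
        obtain ⟨h3, h4⟩ := key1 _ _ _ _ s1 s4 hpos heq
        omega
    · have h' : ¬ #A' + #B' ≤ 2 * k - 2 := by omega
      rw [if_neg h, if_neg h'] at heq
      obtain ⟨h3, h4⟩ := key1 _ _ _ _ s3 s4 (by omega) heq
      have h5 : minCol k col A B = minCol k col A' B' := by omega
      have m1 := minCol_spec k col A B h
      have m2 := minCol_spec k col A' B' h'
      have n1 := hno A' B' hd (minCol k col A' B')
      have n2 := hmono A A' hA (minCol k col A' B')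
      have n3 := hmono B B' hB (minCol k col A' B')
      unfold sgnBig at h4
      rw [h5] at h4 m1
      by_cases q1 : HasCol k col A (minCol k col A' B')
      · rw [if_pos q1, if_pos (n2 q1)] at h4
        omega
      · have q2 := fun q => n1 q (n3 (m1.resolve_left q1))
        rw [if_neg q1, if_neg q2] at h4
        omega
  · intro A B hd hne
    unfold kLabel
    split_ifs with h
    · rcases sgnSmall_abs A B with h1 | h1 <;> rw [h1] <;> omega
    · have hlt : minCol k col A B < C := by
        rcases minCol_spec k col A B h with h1 | h1 <;> exact hClt _ _ h1
      rcases sgnBig_abs k col A B with h1 | h1 <;> rw [h1] <;> omega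

end Kneser

lemma card_distMultiset {V : Type*} (G : SimpleGraph V) (S : Finset V) :
    Multiset.card (distMultiset G S) = (#S).choose 2 := by
  classical
  unfold distMultiset
  rw [Multiset.card_map, ← Sym2.card_image_offDiag]
  change #_ = #_
  congr 1
  ext p
  induction p using Sym2.ind with
  | _ a b =>
    simp only [mem_filter, Finset.mk_mem_sym2_iff, Sym2.mk_isDiag_iff, mem_image, mem_offDiag,
      Prod.exists]
    constructor
    · rintro ⟨⟨h1, h2⟩, h3⟩
      exact ⟨a, b, ⟨h1, h2, h3⟩, rfl⟩
    · rintro ⟨x, y, ⟨h1, h2, h3⟩, h4⟩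
      rcases Sym2.eq_iff.1 h4 with ⟨rfl, rfl⟩ | ⟨rfl, rfl⟩
      · exact ⟨⟨h1, h2⟩, h3⟩
      · exact ⟨⟨h2, h1⟩, Ne.symm h3⟩

lemma mem_distMultiset {V : Type*} (G : SimpleGraph V) (hG : G.Connected) (d : ℕ) (hd : G.diam = d)
    (hd2 : 2 ≤ d) (S : Finset V) (t : ℕ) (ht : t ∈ distMultiset G S) : 1 ≤ t ∧ t ≤ d := by
  classical
  unfold distMultiset at ht
  rw [Multiset.mem_map] at ht
  obtain ⟨p, hp, rfl⟩ := ht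
  rw [mem_val, mem_filter] at hp
  have hp := hp.2
  induction p using Sym2.ind with
  | _ a b =>
    rw [Sym2.mk_isDiag_iff] at hp
    simp only [Sym2.lift_mk]
    refine ⟨hG.pos_dist_of_ne hp, ?_⟩
    rw [← hd]
    exact SimpleGraph.dist_le_diam (SimpleGraph.ediam_ne_top_of_diam_ne_zero (by omega))

lemma multiset_eq (d : ℕ) (M M' : Multiset ℕ) (hc : Multiset.card M = Multiset.card M')
    (h : ∀ t ∈ M, 1 ≤ t ∧ t ≤ d) (h' : ∀ t ∈ M', 1 ≤ t ∧ t ≤ d) (hd : 2 ≤ d)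
    (he : ∀ t, 1 ≤ t → t < d → M.count t = M'.count t) : M = M' := by
  have hcount : ∀ t, t ≠ d → M.count t = M'.count t := by
    intro t ht
    by_cases h1 : 1 ≤ t ∧ t < d
    · exact he t h1.1 h1.2
    · rw [Multiset.count_eq_zero_of_notMem, Multiset.count_eq_zero_of_notMem]
      · intro hm; have := h' t hm; omega
      · intro hm; have := h t hm; omega
  ext t
  by_cases ht : t = d
  · subst ht
    have s1 := Multiset.sum_count_eq_card (s := range (t+1)) (m := M)
      (fun a ha => by rw [mem_range]; have := h a ha; omega)
    have s2 := Multiset.sum_count_eq_card (s := range (t+1)) (m := M')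
      (fun a ha => by rw [mem_range]; have := h' a ha; omega)
    rw [sum_range_succ] at s1 s2
    rw [sum_congr rfl (fun a ha => hcount a (by rw [mem_range] at ha; omega))] at s1
    omega
  · exact hcount t ht

lemma exists_homometric {V : Type*} [Fintype V] (G : SimpleGraph V) (hG : G.Connected)
    (d k : ℕ) (hd : G.diam = d) (hd2 : 2 ≤ d) (hk : 1 ≤ k)
    (hbig : (k.choose 2 + 1) ^ (d - 1) + 2 * k - 1 ≤ Fintype.card V) :
    ∃ S₁ S₂ : Finset V, Homometric G S₁ S₂ ∧ S₁.card = k ∧ S₂.card = k := by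
  classical
  set e := (Fintype.equivFin V).symm with he
  let cf : Finset V → (Fin (d - 1) → Fin (k.choose 2 + 1)) := fun S i =>
    Fin.ofNat _ ((distMultiset G S).count ((i : ℕ) + 1))
  let col : Finset (Fin (Fintype.card V)) → ℕ := fun S =>
    Fintype.equivFin (Fin (d - 1) → Fin (k.choose 2 + 1)) (cf (S.map e.toEmbedding))
  obtain ⟨S, T, h1, h2, h3, h4⟩ := kneser (C := (k.choose 2 + 1) ^ (d - 1)) hk col (by
    intro S _
    refine lt_of_lt_of_eq (Fin.is_lt _) ?_
    simp) hbig
  have h5 : cf (S.map e.toEmbedding) = cf (T.map e.toEmbedding) :=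
    (Fintype.equivFin _).injective (Fin.ext h4)
  refine ⟨S.map e.toEmbedding, T.map e.toEmbedding, ⟨(disjoint_map _).2 h1, ?_⟩, by simpa, by simpa⟩
  have c1 := card_distMultiset G (S.map e.toEmbedding)
  have c2 := card_distMultiset G (T.map e.toEmbedding)
  rw [card_map, h2] at c1
  rw [card_map, h3] at c2
  refine multiset_eq d _ _ (by rw [c1, c2]) (mem_distMultiset G hG d hd hd2 _)
    (mem_distMultiset G hG d hd hd2 _) hd2 ?_
  intro t ht1 ht2
  have h6 := congrArg Fin.val (congrFun h5 ⟨t - 1, by omega⟩)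
  simp only [cf, Fin.val_ofNat, Nat.sub_add_cancel ht1] at h6
  have l1 := Multiset.count_le_card t (distMultiset G (S.map e.toEmbedding))
  have l2 := Multiset.count_le_card t (distMultiset G (T.map e.toEmbedding))
  rwa [Nat.mod_eq_of_lt (by omega), Nat.mod_eq_of_lt (by omega)] at h6

lemma num_bound (j e : ℕ) (hj : 1 ≤ j) (he : 1 ≤ e) :
    ((j + 1).choose 2 + 1) ^ e + 2 * (j + 1) - 1 ≤ (2 * j) ^ (2 * e) + 1 := by
  have h1 : (j + 1).choose 2 ≤ j * j := by
    rw [Nat.choose_two_right, Nat.add_sub_cancel]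
    apply Nat.div_le_of_le_mul
    nlinarith
  have h2 : 2 * (j + 1).choose 2 ≤ (j + 1) * j := by
    rw [Nat.choose_two_right, Nat.add_sub_cancel]
    exact Nat.mul_div_le _ _
  have h3 : ((j + 1).choose 2 + 1) + 2 * j ≤ (2 * j) ^ 2 := by nlinarith
  have h4 : ∀ a b : ℕ, a ^ e + b ^ e ≤ (a + b) ^ e := fun a b => pow_add_pow_le (by simp) (by simp) (by omega)
  have h5 := h4 ((j + 1).choose 2 + 1) (2 * j)
  have h6 := Nat.pow_le_pow_left h3 e
  have h7 : 2 * j ≤ (2 * j) ^ e := Nat.le_self_pow (by omega) _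
  rw [← pow_mul] at h6
  omega

theorem stmt4 {V : Type*} [Fintype V] (G : SimpleGraph V) (hG : G.Connected)
    (n d : ℕ) (hn : Fintype.card V = n) (hd : G.diam = d) (hd2 : 2 ≤ d)
    (hbig : d ^ (2 * d - 2) ≤ n) :
    (1 / 2 : ℝ) * (n : ℝ) ^ ((1 : ℝ) / (2 * (d : ℝ) - 2)) ≤ homNumber G := by
  have hn2 : 2 ≤ n := by
    have : d ≤ d ^ (2 * d - 2) := Nat.le_self_pow (by omega) _
    omega
  have hmax : ∀ k, (∃ S₁ S₂ : Finset V, Homometric G S₁ S₂ ∧ S₁.card = k ∧ S₂.card = k) →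
      k ≤ homNumber G := by
    intro k hk
    refine le_csSup ⟨Fintype.card V, ?_⟩ hk
    rintro h ⟨S, T, -, h1, -⟩
    rw [← h1]
    exact card_le_univ S
  set j := homNumber G with hj
  have hle : n ≤ (2 * j) ^ (2 * (d - 1)) := by
    by_contra hlt
    rw [not_le] at hlt
    have := hmax (j + 1) (exists_homometric G hG d (j + 1) hd hd2 (by omega) (by
      rw [hn]
      rcases Nat.eq_zero_or_pos j with h0 | h0
      · rw [h0]; simpa using hn2
      · have := num_bound j (d - 1) h0 (by omega)
        omega))
    omega
  have hexp : (2 * (d : ℝ) - 2) = ((2 * (d - 1) : ℕ) : ℝ) := by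
    rw [Nat.cast_mul, Nat.cast_sub (by omega)]; push_cast; ring
  have h1 : (n : ℝ) ≤ ((2 * j : ℕ) : ℝ) ^ (2 * (d - 1)) := by exact_mod_cast hle
  have h2 : (n : ℝ) ^ ((1 : ℝ) / (2 * (d : ℝ) - 2)) ≤ ((2 * j : ℕ) : ℝ) := by
    rw [hexp, one_div]
    calc _ ≤ (((2 * j : ℕ) : ℝ) ^ (2 * (d - 1))) ^ (((2 * (d - 1) : ℕ) : ℝ))⁻¹ :=
          Real.rpow_le_rpow (by positivity) h1 (by positivity)
      _ = _ := Real.pow_rpow_inv_natCast (by positivity) (by omega)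
  push_cast at h2
  linarith
end

section
/- For every tree T on n ≥ 1 vertices, h(T) ≥ n^(1/3) − 1. -/
open Finset

section Helpers

variable {V : Type*} {G : SimpleGraph V}

/-- The number of the pairs, indexed by an injective family. -/
lemma hm_distMultiset_image [DecidableEq V] {ι : Type*} (s : Finset ι) (a : ι → V)
    (ha : Set.InjOn a s) :
    distMultiset G (s.image a) =
      letI := Classical.decEq ι
      (s.sym2.filter fun p => ¬ p.IsDiag).val.map
        (Sym2.lift ⟨fun i j => G.dist (a i) (a j), fun _ _ => SimpleGraph.dist_comm⟩) := by
  classical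
  unfold distMultiset
  have hinj : Set.InjOn (Sym2.map a) ((s.sym2.filter fun p => ¬ p.IsDiag : Finset (Sym2 ι)) :
      Set (Sym2 ι)) := by
    intro p hp q hq h
    induction p with | _ x y
    induction q with | _ z w
    simp only [Finset.coe_filter, Set.mem_setOf_eq, Finset.mk_mem_sym2_iff] at hp hq
    simp only [Sym2.map_mk, Sym2.eq_iff] at h ⊢
    rcases h with ⟨h1, h2⟩ | ⟨h1, h2⟩
    · exact Or.inl ⟨ha hp.1.1 hq.1.1 h1, ha hp.1.2 hq.1.2 h2⟩
    · exact Or.inr ⟨ha hp.1.1 hq.1.2 h1, ha hp.1.2 hq.1.1 h2⟩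
  have himg : ((s.image a).sym2.filter fun p => ¬ p.IsDiag) =
      (s.sym2.filter fun p => ¬ p.IsDiag).image (Sym2.map a) := by
    rw [Finset.sym2_image]
    ext q
    simp only [Finset.mem_filter, Finset.mem_image]
    constructor
    · rintro ⟨⟨p, hp, rfl⟩, hd⟩
      refine ⟨p, ⟨hp, ?_⟩, rfl⟩
      induction p with | _ x y
      simp only [Sym2.map_mk, Sym2.mk_isDiag_iff] at hd ⊢
      exact fun h => hd (by rw [h])
    · rintro ⟨p, ⟨hp, hd⟩, rfl⟩
      refine ⟨⟨p, hp, rfl⟩, ?_⟩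
      induction p with | _ x y
      simp only [Sym2.map_mk, Sym2.mk_isDiag_iff, Finset.mk_mem_sym2_iff] at hp hd ⊢
      exact fun h => hd (ha hp.1 hp.2 h)
  have key := Finset.image_val_of_injOn hinj
  convert congrArg (Multiset.map (Sym2.lift ⟨fun a b => G.dist a b,
    fun _ _ => SimpleGraph.dist_comm⟩ : Sym2 V → ℕ)) key using 1
  · congr 1
    rw [← himg]
    congr!
  · rw [Multiset.map_map]
    apply Multiset.map_congr
    · congr!
    · intro p _
      induction p with | _ x y
      rfl

lemma hm_le_homNumber [Fintype V] {ι : Type*} (s : Finset ι) (a b : ι → V)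
    (ha : Set.InjOn a s) (hb : Set.InjOn b s) (hab : ∀ i ∈ s, ∀ j ∈ s, a i ≠ b j)
    (hd : ∀ i ∈ s, ∀ j ∈ s, i ≠ j → G.dist (a i) (a j) = G.dist (b i) (b j)) :
    s.card ≤ homNumber G := by
  classical
  apply le_csSup
  · refine ⟨Fintype.card V, ?_⟩
    rintro h ⟨S₁, S₂, -, rfl, -⟩
    exact Finset.card_le_univ _
  · refine ⟨s.image a, s.image b, ⟨?_, ?_⟩, Finset.card_image_of_injOn ha,
      Finset.card_image_of_injOn hb⟩
    · rw [Finset.disjoint_left]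
      intro x hx hy
      simp only [Finset.mem_image] at hx hy
      obtain ⟨i, hi, rfl⟩ := hx
      obtain ⟨j, hj, h⟩ := hy
      exact hab i hi j hj h.symm
    · rw [hm_distMultiset_image s a ha, hm_distMultiset_image s b hb]
      apply Multiset.map_congr rfl
      intro p hp
      induction p with | _ x y
      simp only [Finset.mem_val, Finset.mem_filter, Finset.mk_mem_sym2_iff,
        Sym2.mk_isDiag_iff] at hp
      exact hd x hp.1.1 y hp.1.2 hp.2

/-- A geodesic, as a sequence of vertices. -/
lemma hm_geodesic (hG : G.Connected) (x y : V) :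
    ∃ g : ℕ → V, g 0 = x ∧ g (G.dist x y) = y ∧
      ∀ i j, i ≤ j → j ≤ G.dist x y → G.dist (g i) (g j) = j - i := by
  obtain ⟨p, hp⟩ := hG.exists_walk_length_eq_dist x y
  have hle : ∀ i d, i + d ≤ p.length → G.dist (p.getVert i) (p.getVert (i + d)) ≤ d := by
    intro i d
    induction d with
    | zero => intro _; simp
    | succ d ih =>
      intro h
      have h1 := ih (by omega)
      have h2 := p.adj_getVert_succ (i := i + d) (by omega)
      have h3 := SimpleGraph.dist_eq_one_iff_adj.2 h2
      have h4 := hG.dist_triangle (u := p.getVert i) (v := p.getVert (i + d))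
        (w := p.getVert (i + d + 1))
      rw [← add_assoc]
      omega
  refine ⟨p.getVert, p.getVert_zero, hp ▸ p.getVert_length, ?_⟩
  intro i j hij hj
  rw [← hp] at hj
  have h1 := hle 0 i (by omega)
  have h2 := hle i (j - i) (by omega)
  have h3 := hle j (p.length - j) (by omega)
  rw [zero_add, p.getVert_zero] at h1
  rw [show i + (j - i) = j by omega] at h2
  rw [show j + (p.length - j) = p.length by omega, p.getVert_length] at h3
  have h4 := hG.dist_triangle (u := x) (v := p.getVert i) (w := y)
  have h5 := hG.dist_triangle (u := p.getVert i) (v := p.getVert j) (w := y)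
  omega

lemma hm_of_long [Fintype V] (hG : G.Connected) (x y : V) (k : ℕ)
    (h : 2 * k ≤ G.dist x y + 1) : k ≤ homNumber G := by
  obtain ⟨g, -, -, hg⟩ := hm_geodesic hG x y
  have hinj : ∀ i j, i < j → j ≤ G.dist x y → g i ≠ g j := by
    intro i j hij hj h
    have := hg i j hij.le hj
    rw [h, SimpleGraph.dist_self] at this
    omega
  have := hm_le_homNumber (G := G) (Finset.range k) g (fun i => g (k + i)) ?_ ?_ ?_ ?_
  · simpa using this
  · intro i hi j hj h
    simp only [Finset.coe_range, Set.mem_Iio] at hi hj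
    rcases lt_trichotomy i j with h1 | h1 | h1
    · exact absurd h (hinj _ _ h1 (by omega))
    · exact h1
    · exact absurd h.symm (hinj _ _ h1 (by omega))
  · intro i hi j hj h
    simp only [Finset.coe_range, Set.mem_Iio] at hi hj
    rcases lt_trichotomy i j with h1 | h1 | h1
    · exact absurd h (hinj _ _ (by omega) (by omega))
    · exact h1
    · exact absurd h.symm (hinj _ _ (by omega) (by omega))
  · intro i hi j hj
    simp only [Finset.mem_range] at hi hj
    exact hinj _ _ (by omega) (by omega)
  · intro i hi j hj _
    simp only [Finset.mem_range] at hi hj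
    rcases le_total i j with h1 | h1
    · rw [hg i j h1 (by omega), hg (k + i) (k + j) (by omega) (by omega)]
      omega
    · rw [SimpleGraph.dist_comm, hg j i h1 (by omega), SimpleGraph.dist_comm,
        hg (k + j) (k + i) (by omega) (by omega)]
      omega

/-- `w` is the ancestor at depth `i` of `u`, in the tree rooted at `r`. -/
def HmAnc (G : SimpleGraph V) (r : V) (i : ℕ) (w u : V) : Prop :=
  G.dist r w = i ∧ G.dist w u + i = G.dist r u

lemma hmAnc_exists (hG : G.Connected) (r u : V) (i : ℕ) (hi : i ≤ G.dist r u) :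
    ∃ w, HmAnc G r i w u := by
  obtain ⟨g, h0, h1, hg⟩ := hm_geodesic hG r u
  refine ⟨g i, ?_, ?_⟩
  · have := hg 0 i (by omega) hi
    rw [h0] at this
    omega
  · have := hg i _ hi le_rfl
    rw [h1] at this
    omega

lemma hmAnc_unique (hT : G.IsTree) {r u w w' : V} {i : ℕ} (h : HmAnc G r i w u)
    (h' : HmAnc G r i w' u) : w = w' := by
  have aux : ∀ w, HmAnc G r i w u → ∃ p : G.Walk r u, p.IsPath ∧ p.getVert i = w := by
    rintro w ⟨h1, h2⟩
    obtain ⟨p, hp⟩ := hT.connected.exists_walk_length_eq_dist r w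
    obtain ⟨q, hq⟩ := hT.connected.exists_walk_length_eq_dist w u
    refine ⟨p.append q, SimpleGraph.Walk.isPath_of_length_eq_dist _ ?_, ?_⟩
    · rw [SimpleGraph.Walk.length_append]
      omega
    · rw [SimpleGraph.Walk.getVert_append, if_neg (by omega), show i - p.length = 0 by omega,
        q.getVert_zero]
  obtain ⟨p, hp, rfl⟩ := aux w h
  obtain ⟨q, hq, rfl⟩ := aux w' h'
  rw [(hT.existsUnique_path r u).unique hp hq]

lemma hm_adj_dist (hT : G.IsTree) (r : V) {u v : V} (h : G.Adj u v) :
    G.dist r v = G.dist r u + 1 ∨ G.dist r u = G.dist r v + 1 := by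
  have h1 := hT.dist_ne_of_adj r h
  have h2 := SimpleGraph.dist_eq_one_iff_adj.2 h
  have h3 := hT.connected.dist_triangle (u := r) (v := u) (w := v)
  have h4 := hT.connected.dist_triangle (u := r) (v := v) (w := u)
  rw [SimpleGraph.dist_comm (u := v)] at h4
  omega

lemma hm_parity (hT : G.IsTree) (r u v : V) :
    (G.dist r u + G.dist r v + G.dist u v) % 2 = 0 := by
  have aux : ∀ {u v : V} (p : G.Walk u v), (G.dist r u + G.dist r v + p.length) % 2 = 0 := by
    intro u v p
    induction p with
    | nil => simp only [SimpleGraph.Walk.length_nil]; omega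
    | cons h p ih =>
      have := hm_adj_dist hT r h
      rw [SimpleGraph.Walk.length_cons]
      omega
  obtain ⟨p, hp⟩ := hT.connected.exists_walk_length_eq_dist u v
  rw [← hp]
  exact aux p

lemma hmAnc_share (hT : G.IsTree) (r : V) (i : ℕ) (w : V) {u v : V} (p : G.Walk u v)
    (hp : p.length + 2 * i ≤ G.dist r u + G.dist r v) (h : HmAnc G r i w u) :
    HmAnc G r i w v := by
  induction p with
  | nil => exact h
  | @cons u u' v hadj p ih =>
    rw [SimpleGraph.Walk.length_cons] at hp
    have h1 := hm_adj_dist hT r hadj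
    have h2 := SimpleGraph.dist_le p
    have h3 := hT.connected.dist_triangle (u := r) (v := u') (w := v)
    have h4 := SimpleGraph.dist_eq_one_iff_adj.2 hadj
    apply ih (by omega)
    rcases h1 with h1 | h1
    · refine ⟨h.1, ?_⟩
      have h5 := hT.connected.dist_triangle (u := w) (v := u) (w := u')
      have h6 := hT.connected.dist_triangle (u := r) (v := w) (w := u')
      have := h.1
      have := h.2
      omega
    · obtain ⟨w', hw'⟩ := hmAnc_exists hT.connected r u' i (by omega)
      have : HmAnc G r i w' u := by
        refine ⟨hw'.1, ?_⟩
        have h5 := hT.connected.dist_triangle (u := w') (v := u') (w := u)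
        have h6 := hT.connected.dist_triangle (u := r) (v := w') (w := u)
        rw [SimpleGraph.dist_comm (u := u')] at h5
        have := hw'.1
        have := hw'.2
        omega
      rw [hmAnc_unique hT h this]
      exact hw'

/-- The four-point condition. -/
lemma hm_four_point (hT : G.IsTree) (r u v w : V) :
    G.dist u v + G.dist r w ≤
      max (G.dist u w + G.dist r v) (G.dist w v + G.dist r u) := by
  have key : ∀ i, G.dist u w + 2 * i ≤ G.dist r u + G.dist r w →
      G.dist w v + 2 * i ≤ G.dist r w + G.dist r v →
      G.dist u v + 2 * i ≤ G.dist r u + G.dist r v := by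
    intro i h1 h2
    obtain ⟨p, hp⟩ := hT.connected.exists_walk_length_eq_dist u w
    obtain ⟨q, hq⟩ := hT.connected.exists_walk_length_eq_dist w v
    have h3 := hT.connected.dist_triangle (u := r) (v := u) (w := w)
    obtain ⟨z, hz⟩ := hmAnc_exists hT.connected r u i (by omega)
    have hzw := hmAnc_share hT r i z p (by omega) hz
    have hzv := hmAnc_share hT r i z q (by omega) hzw
    have h4 := hT.connected.dist_triangle (u := u) (v := z) (w := v)
    rw [SimpleGraph.dist_comm (u := u) (v := z)] at h4
    have := hz.2
    have := hzv.2
    omega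
  have p1 := hm_parity hT r u w
  have p2 := hm_parity hT r w v
  have t1 := hT.connected.dist_triangle (u := u) (v := r) (w := w)
  have t2 := hT.connected.dist_triangle (u := w) (v := r) (w := v)
  rw [SimpleGraph.dist_comm (u := u) (v := r)] at t1
  rw [SimpleGraph.dist_comm (u := w) (v := r)] at t2
  have := key (min ((G.dist r u + G.dist r w - G.dist u w) / 2)
    ((G.dist r w + G.dist r v - G.dist w v) / 2)) (by omega) (by omega)
  omega

/-- Either many pairs at distance `t`, or few points to delete to destroy them all. -/
lemma hm_pairs (X : Finset V) (t : ℕ) (ht : 0 < t) (j : ℕ) :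
    (∃ (A : Finset V) (f : V → V), A.card = j ∧ A ⊆ X ∧ (∀ a ∈ A, f a ∈ X) ∧ Set.InjOn f A ∧
      (∀ a ∈ A, ∀ b ∈ A, a ≠ f b) ∧ ∀ a ∈ A, G.dist a (f a) = t) ∨
    ∃ X' ⊆ X, X.card + 2 ≤ X'.card + 2 * j ∧ ∀ x ∈ X', ∀ y ∈ X', G.dist x y ≠ t := by
  classical
  induction j with
  | zero => exact Or.inl ⟨∅, id, by simp⟩
  | succ j ih =>
    rcases ih with ⟨A, f, hA, hAX, hfX, hinj, hdisj, hd⟩ | ⟨X', h1, h2, h3⟩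
    · by_cases hex : ∃ x ∈ X \ (A ∪ A.image f), ∃ y ∈ X \ (A ∪ A.image f), G.dist x y = t
      · obtain ⟨x, hx, y, hy, hxy⟩ := hex
        left
        simp only [Finset.mem_sdiff, Finset.mem_union, Finset.mem_image, not_or, not_exists,
          not_and] at hx hy
        have hne : x ≠ y := by
          rintro rfl
          rw [SimpleGraph.dist_self] at hxy
          omega
        have hf : ∀ a ∈ A, Function.update f x y a = f a := by
          intro a ha
          apply Function.update_of_ne
          rintro rfl
          exact hx.2.1 ha
        have hfx : Function.update f x y x = y := Function.update_self ..
        refine ⟨insert x A, Function.update f x y, ?_, ?_, ?_, ?_, ?_, ?_⟩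
        · rw [Finset.card_insert_of_notMem hx.2.1, hA]
        · exact Finset.insert_subset hx.1 hAX
        · intro a ha
          rcases Finset.mem_insert.1 ha with rfl | ha
          · rw [hfx]; exact hy.1
          · rw [hf a ha]; exact hfX a ha
        · intro a ha b hb hab
          rcases Finset.mem_insert.1 (Finset.mem_coe.1 ha) with ha | ha <;>
            rcases Finset.mem_insert.1 (Finset.mem_coe.1 hb) with hb | hb
          · rw [ha, hb]
          · rw [ha, hfx, hf b hb] at hab
            exact absurd hab.symm (hy.2.2 b hb)
          · rw [hb, hfx, hf a ha] at hab
            exact absurd hab (hy.2.2 a ha)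
          · rw [hf a ha, hf b hb] at hab
            exact hinj ha hb hab
        · intro a ha b hb hab
          rcases Finset.mem_insert.1 ha with ha | ha <;>
            rcases Finset.mem_insert.1 hb with hb | hb
          · rw [ha, hb, hfx] at hab
            exact hne hab
          · rw [ha, hf b hb] at hab
            exact hx.2.2 b hb hab.symm
          · rw [hb, hfx] at hab
            exact hy.2.1 (hab ▸ ha)
          · rw [hf b hb] at hab
            exact hdisj a ha b hb hab
        · intro a ha
          rcases Finset.mem_insert.1 ha with rfl | ha
          · rw [hfx]; exact hxy
          · rw [hf a ha]; exact hd a ha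
      · right
        push Not at hex
        refine ⟨_, Finset.sdiff_subset, ?_, hex⟩
        have c1 := Finset.le_card_sdiff (A ∪ A.image f) X
        have c2 := Finset.card_union_le A (A.image f)
        have c3 : (A.image f).card ≤ A.card := Finset.card_image_le
        omega
    · exact Or.inr ⟨X', h1, by omega, h3⟩

/-- Bound for sets on which the distance is an ultrametric with even values. -/
lemma hm_ultra [Fintype V] (hG : G.Connected) (k : ℕ) (hk : homNumber G < k) (e : ℕ) (m : ℕ) :
    ∀ X : Finset V,
    (∀ x ∈ X, ∀ y ∈ X, ∀ z ∈ X, G.dist x y ≤ max (G.dist x z) (G.dist z y)) →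
    (∀ x ∈ X, ∀ y ∈ X, G.dist x y % 2 = 0) →
    (∀ x ∈ X, ∀ y ∈ X, G.dist x y ≤ 2 * e) → m ≤ e →
    (∀ x ∈ X, ∀ y ∈ X, x ≠ y → 2 * (e - m) < G.dist x y) →
    X.card ≤ 2 * (k - 1) * m + 1 := by
  induction m with
  | zero =>
    intro X _ _ hub _ hlb
    have : X.card ≤ 1 := by
      rw [Finset.card_le_one]
      intro x hx y hy
      by_contra hne
      have h1 := hub x hx y hy
      have h2 := hlb x hx y hy hne
      omega
    omega
  | succ m ih =>
    intro X hu hev hub hme hlb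
    rcases hm_pairs (G := G) X (2 * (e - m)) (by omega) k with
      ⟨A, f, hA, hAX, hfX, hinj, hdisj, hd⟩ | ⟨X', h1, h2, h3⟩
    · exfalso
      have := hm_le_homNumber (G := G) A id f (fun _ _ _ _ h => h) hinj hdisj ?_
      · omega
      · intro a ha b hb hab
        simp only [id]
        have hfab : f a ≠ f b := fun h => hab (hinj ha hb h)
        have l1 := hlb a (hAX ha) b (hAX hb) hab
        have l2 := hlb _ (hfX a ha) _ (hfX b hb) hfab
        have e1 := hev a (hAX ha) b (hAX hb)
        have e2 := hev _ (hfX a ha) _ (hfX b hb)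
        have d1 := hd a ha
        have d2 := hd b hb
        have d3 : G.dist (f a) a = _ := SimpleGraph.dist_comm.trans d1
        have d4 : G.dist (f b) b = _ := SimpleGraph.dist_comm.trans d2
        have u1 := hu a (hAX ha) b (hAX hb) (f a) (hfX a ha)
        have u2 := hu (f a) (hfX a ha) b (hAX hb) (f b) (hfX b hb)
        have u3 := hu (f a) (hfX a ha) (f b) (hfX b hb) a (hAX ha)
        have u4 := hu a (hAX ha) (f b) (hfX b hb) b (hAX hb)
        omega
    · have := ih X' (fun x hx y hy z hz => hu x (h1 hx) y (h1 hy) z (h1 hz))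
        (fun x hx y hy => hev x (h1 hx) y (h1 hy)) (fun x hx y hy => hub x (h1 hx) y (h1 hy))
        (by omega) (by
          intro x hx y hy hne
          have l1 := hlb x (h1 hx) y (h1 hy) hne
          have l2 := h3 x hx y hy
          have l3 := hev x (h1 hx) y (h1 hy)
          omega)
      rw [mul_add]
      omega

lemma hm_sphere [Fintype V] (hT : G.IsTree) (k : ℕ) (hk : homNumber G < k) (r : V) (e : ℕ)
    (X : Finset V) (hX : ∀ x ∈ X, G.dist r x = e) : X.card ≤ 2 * (k - 1) * e + 1 := by
  apply hm_ultra hT.connected k hk e e X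
  · intro x hx y hy z hz
    have h := hm_four_point hT r x y z
    have h1 := hX x hx
    have h2 := hX y hy
    have h3 := hX z hz
    omega
  · intro x hx y hy
    have h := hm_parity hT r x y
    have h1 := hX x hx
    have h2 := hX y hy
    omega
  · intro x hx y hy
    have h := hT.connected.dist_triangle (u := x) (v := r) (w := y)
    rw [SimpleGraph.dist_comm (u := x) (v := r)] at h
    have h1 := hX x hx
    have h2 := hX y hy
    omega
  · exact le_rfl
  · intro x hx y hy hne
    have := hT.connected.pos_dist_of_ne hne
    omega

/-- There is a root of small eccentricity. -/
lemma hm_center [Fintype V] (hT : G.IsTree) (k : ℕ) (hk : homNumber G < k) :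
    ∃ r : V, ∀ x, G.dist r x < k := by
  classical
  haveI : Nonempty V := hT.connected.nonempty
  obtain ⟨r, hr⟩ := Finite.exists_min (fun r : V => Finset.univ.sup (fun x => G.dist r x))
  refine ⟨r, ?_⟩
  obtain ⟨x, -, hx⟩ := Finset.exists_mem_eq_sup Finset.univ Finset.univ_nonempty
    (fun x => G.dist r x)
  have hmax : ∀ y, G.dist r y ≤ G.dist r x := by
    intro y
    rw [← hx]
    exact Finset.le_sup (f := fun x => G.dist r x) (Finset.mem_univ y)
  by_contra hcon
  push Not at hcon
  obtain ⟨y₀, hy₀⟩ := hcon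
  have hR : k ≤ G.dist r x := hy₀.trans (hmax y₀)
  obtain ⟨r', hr'⟩ := hmAnc_exists hT.connected r x 1 (by omega)
  have hadj := SimpleGraph.dist_eq_one_iff_adj.1 hr'.1
  obtain ⟨y, -, hy⟩ := Finset.exists_mem_eq_sup Finset.univ Finset.univ_nonempty
    (fun x => G.dist r' x)
  have hge : G.dist r x ≤ G.dist r' y := by
    have := hr r'
    simp only [hx, hy] at this
    exact this
  have h1 := hm_adj_dist hT y hadj
  rw [SimpleGraph.dist_comm (u := y) (v := r'), SimpleGraph.dist_comm (u := y) (v := r)] at h1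
  have h2 := hmax y
  have h3 := hm_four_point hT r r' y x
  have h4 := hr'.1
  have h5 := hr'.2
  have := hm_of_long hT.connected x y k (by omega)
  omega

lemma hm_main [Fintype V] (hT : G.IsTree) (k : ℕ) (hk : homNumber G < k) :
    Fintype.card V ≤ k ^ 3 := by
  classical
  obtain ⟨r, hr⟩ := hm_center hT k hk
  have h1 : (Finset.univ : Finset V).card = ∑ e ∈ Finset.range k,
      (Finset.univ.filter fun x => G.dist r x = e).card := by
    apply Finset.card_eq_sum_card_fiberwise
    intro x _
    simpa using hr x
  have h2 : ∀ m, ∑ e ∈ Finset.range m, (2 * (k - 1) * e + 1) = (k - 1) * (m * (m - 1)) + m := by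
    intro m
    induction m with
    | zero => simp
    | succ m ih =>
      rw [Finset.sum_range_succ, ih]
      cases m with
      | zero => simp
      | succ m => simp only [Nat.add_sub_cancel]; ring
  rw [← Finset.card_univ, h1]
  refine (Finset.sum_le_sum (g := fun e => 2 * (k - 1) * e + 1) ?_).trans ?_
  · intro e _
    apply hm_sphere hT k hk r e
    simp
  · rw [h2 k]
    obtain ⟨j, rfl⟩ : ∃ j, k = j + 1 := ⟨k - 1, by omega⟩
    simp only [Nat.add_sub_cancel]
    nlinarith [Nat.zero_le j, Nat.zero_le (j ^ 2)]

end Helpers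

/-- For every tree `T` on `n ≥ 1` vertices, `h(T) ≥ n^(1/3) − 1`. -/
theorem stmt5 {V : Type*} [Fintype V] (G : SimpleGraph V) (hT : G.IsTree)
    (n : ℕ) (hn : Fintype.card V = n) (h1 : 1 ≤ n) :
    (n : ℝ) ^ ((1 : ℝ) / 3) - 1 ≤ homNumber G := by
  have h := hm_main hT (homNumber G + 1) (Nat.lt_succ_self _)
  rw [hn] at h
  have h' : (n : ℝ) ≤ ((homNumber G : ℝ) + 1) ^ (3 : ℕ) := by exact_mod_cast h
  have h2 : (n : ℝ) ^ ((1 : ℝ) / 3) ≤ (((homNumber G : ℝ) + 1) ^ (3 : ℕ)) ^ ((1 : ℝ) / 3) :=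
    Real.rpow_le_rpow (Nat.cast_nonneg n) h' (by norm_num)
  rw [← Real.rpow_natCast, ← Real.rpow_mul (by positivity)] at h2
  norm_num at h2
  linarith
end

section
/- For every caterpillar T on n vertices, h(T) ≥ n/6 − 1. (The paper states h(T) ≥ n/6 with floors and ceilings omitted.) -/
open Finset

/-- A caterpillar: a tree containing a path (the spine) such that every vertex not on
the spine is a leaf adjacent to a spine vertex. -/
def IsCaterpillar {V : Type*} [Fintype V] (G : SimpleGraph V) [DecidableRel G.Adj] : Prop :=
  G.IsTree ∧ ∃ (a b : V) (p : G.Walk a b), p.IsPath ∧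
    ∀ v, v ∉ p.support → G.degree v = 1 ∧ ∃ x ∈ p.support, G.Adj v x

lemma aux_distMultiset {V : Type*} [DecidableEq V] (G : SimpleGraph V) (S : Finset V) (f : V → V)
    (hf : Set.InjOn f S) (hd : ∀ a ∈ S, ∀ b ∈ S, a ≠ b → G.dist (f a) (f b) = G.dist a b) :
    distMultiset G S = distMultiset G (S.image f) := by
  unfold distMultiset
  refine Multiset.map_eq_map_of_bij_of_nodup _ _ (Finset.nodup _) (Finset.nodup _)
    (fun p _ => Sym2.map f p) ?_ ?_ ?_ ?_
  · intro p
    induction p using Sym2.ind with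
    | _ a b =>
      simp only [Finset.mem_val, Finset.mem_filter, Finset.mk_mem_sym2_iff, Sym2.mk_isDiag_iff,
        Sym2.map_mk, Finset.mem_image]
      rintro ⟨⟨ha, hb⟩, hab⟩
      exact ⟨⟨⟨a, ha, rfl⟩, ⟨b, hb, rfl⟩⟩, fun h => hab (hf ha hb h)⟩
  · intro p hp q hq
    revert hp hq
    induction p using Sym2.ind with
    | _ a b =>
    induction q using Sym2.ind with
    | _ c d =>
      simp only [Finset.mem_val, Finset.mem_filter, Finset.mk_mem_sym2_iff, Sym2.mk_isDiag_iff,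
        Sym2.map_mk, Sym2.eq_iff]
      rintro ⟨⟨ha, hb⟩, hab⟩ ⟨⟨hc, hd⟩, hcd⟩ (⟨h1, h2⟩ | ⟨h1, h2⟩)
      · exact Or.inl ⟨hf ha hc h1, hf hb hd h2⟩
      · exact Or.inr ⟨hf ha hd h1, hf hb hc h2⟩
  · intro p
    induction p using Sym2.ind with
    | _ a b =>
      simp only [Finset.mem_val, Finset.mem_filter, Finset.mk_mem_sym2_iff, Sym2.mk_isDiag_iff,
        Finset.mem_image]
      rintro ⟨⟨⟨a, ha, rfl⟩, ⟨b, hb, rfl⟩⟩, hab⟩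
      exact ⟨s(a, b), by simpa [ha, hb] using fun h => hab (congrArg f h), by simp⟩
  · intro p
    induction p using Sym2.ind with
    | _ a b =>
      simp only [Finset.mem_val, Finset.mem_filter, Finset.mk_mem_sym2_iff, Sym2.mk_isDiag_iff,
        Sym2.map_mk, Sym2.lift_mk]
      rintro ⟨⟨ha, hb⟩, hab⟩
      exact (hd a ha b hb hab).symm

lemma aux_le {V : Type*} [Fintype V] [DecidableEq V] (G : SimpleGraph V) (S : Finset V) (f : V → V)
    (hf : Set.InjOn f S) (hdis : Disjoint S (S.image f))
    (hd : ∀ a ∈ S, ∀ b ∈ S, a ≠ b → G.dist (f a) (f b) = G.dist a b) :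
    S.card ≤ homNumber G := by
  refine le_csSup ⟨Fintype.card V, ?_⟩
    ⟨S, S.image f, ⟨hdis, aux_distMultiset G S f hf hd⟩, rfl, Finset.card_image_of_injOn hf⟩
  rintro h ⟨S₁, S₂, -, rfl, -⟩
  exact Finset.card_le_univ _

lemma aux_pair {V : Type*} [DecidableEq V] (g : V → V) (B : Finset V) (k : ℕ) :
    ∀ A : Finset V, A.card = k → (∀ a ∈ A, g a ∈ B) →
    ∃ (S : Finset V) (f : V → V), S ⊆ A ∧ S.image f ⊆ A ∧ Set.InjOn f S ∧
      Disjoint S (S.image f) ∧ (∀ a ∈ S, g (f a) = g a) ∧ A.card ≤ 2 * S.card + B.card := by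
  induction k using Nat.strong_induction_on with
  | _ k ih =>
  intro A hA hB
  by_cases hinj : Set.InjOn g A
  · refine ⟨∅, id, by simp, by simp, by simp, by simp, by simp, ?_⟩
    simpa using Finset.card_le_card_of_injOn g hB hinj
  · simp only [Set.InjOn, not_forall] at hinj
    obtain ⟨a, ha, b, hb, hg, hab⟩ := hinj
    rw [Finset.mem_coe] at ha hb
    have hb' : b ∈ A.erase a := Finset.mem_erase.2 ⟨fun h => hab h.symm, hb⟩
    have c1 := Finset.card_erase_add_one ha
    have c2 := Finset.card_erase_add_one hb'
    obtain ⟨S, f, h1, h2, h3, h4, h5, h6⟩ := ih ((A.erase a).erase b).card (by omega) _ rfl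
      (fun x hx => hB x (Finset.mem_of_mem_erase (Finset.mem_of_mem_erase hx)))
    have haS : a ∉ S := fun h => by simpa using h1 h
    have hbS : b ∉ S := fun h => by simpa using h1 h
    have hfm : ∀ x ∈ S, f x ≠ b ∧ f x ≠ a ∧ f x ∈ A := fun x hx => by
      simpa using h2 (Finset.mem_image_of_mem f hx)
    have hup : ∀ x ∈ S, Function.update f a b x = f x := fun x hx =>
      Function.update_of_ne (by rintro rfl; exact haS hx) _ _
    have him : (insert a S).image (Function.update f a b) = insert b (S.image f) := by
      rw [Finset.image_insert, Function.update_self]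
      congr 1
      exact Finset.image_congr hup
    refine ⟨insert a S, Function.update f a b, ?_, ?_, ?_, ?_, ?_, ?_⟩
    · intro x hx
      rcases Finset.mem_insert.1 hx with rfl | hx
      · exact ha
      · exact Finset.mem_of_mem_erase (Finset.mem_of_mem_erase (h1 hx))
    · rw [him]
      intro x hx
      rcases Finset.mem_insert.1 hx with rfl | hx
      · exact hb
      · exact Finset.mem_of_mem_erase (Finset.mem_of_mem_erase (h2 hx))
    · intro x hx y hy hxy
      simp only [Finset.coe_insert, Set.mem_insert_iff, Finset.mem_coe] at hx hy
      rcases hx with rfl | hx <;> rcases hy with rfl | hy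
      · rfl
      · rw [hup y hy, Function.update_self] at hxy
        exact absurd hxy.symm (hfm y hy).1
      · rw [hup x hx, Function.update_self] at hxy
        exact absurd hxy (hfm x hx).1
      · rw [hup x hx, hup y hy] at hxy
        exact h3 hx hy hxy
    · rw [him]
      rw [Finset.disjoint_insert_left, Finset.disjoint_insert_right]
      refine ⟨?_, hbS, h4⟩
      rw [Finset.mem_insert, Finset.mem_image]
      rintro (h | ⟨x, hx, h⟩)
      · exact hab h
      · exact (hfm x hx).2.1 h
    · intro x hx
      rcases Finset.mem_insert.1 hx with rfl | hx
      · rw [Function.update_self, hg]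
      · rw [hup x hx, h5 x hx]
    · rw [Finset.card_insert_of_notMem haS]
      omega

lemma aux_leaf {V : Type*} [Fintype V] (G : SimpleGraph V) [DecidableRel G.Adj]
    (hc : G.Connected) (v x w : V) (hv : G.degree v = 1) (hx : G.Adj v x) (hw : v ≠ w) :
    G.dist v w = 1 + G.dist x w := by
  apply le_antisymm
  · have := hc.dist_triangle (u := v) (v := x) (w := w)
    rwa [SimpleGraph.dist_eq_one_iff_adj.2 hx] at this
  · obtain ⟨q, hq⟩ := hc.exists_walk_length_eq_dist v w
    rw [← hq]
    cases q with
    | nil => exact absurd rfl hw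
    | @cons _ y _ h q =>
      have : y = x := by
        rw [← SimpleGraph.card_neighborFinset_eq_degree, Finset.card_eq_one] at hv
        obtain ⟨z, hz⟩ := hv
        have h1 : y ∈ G.neighborFinset v := by simpa using h
        have h2 : x ∈ G.neighborFinset v := by simpa using hx
        rw [hz, Finset.mem_singleton] at h1 h2
        rw [h1, h2]
      subst this
      have := SimpleGraph.dist_le q
      simp only [SimpleGraph.Walk.length_cons]
      omega

lemma aux_path {V : Type*} (G : SimpleGraph V) (hT : G.IsTree) (a b : V) (p : G.Walk a b)
    (hp : p.IsPath) (i j : ℕ) (hij : i ≤ j) (hj : j ≤ p.length) :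
    G.dist (p.getVert i) (p.getVert j) = j - i := by
  obtain ⟨q, hq, hl⟩ := hT.connected.exists_path_of_dist (p.getVert i) (p.getVert j)
  have h1 : ((p.drop i).take (j - i)).IsPath := (hp.drop i).take _
  have e : (p.drop i).getVert (j - i) = p.getVert j := by
    rw [SimpleGraph.Walk.drop_getVert]; congr 1; omega
  have h2 : (((p.drop i).take (j - i)).copy rfl e).IsPath := by simpa using h1
  have h3 : (⟨q, hq⟩ : G.Path _ _) = ⟨_, h2⟩ := (hT.isAcyclic.subsingleton_path _ _).elim _ _
  have h4 : q = ((p.drop i).take (j - i)).copy rfl e := congrArg Subtype.val h3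
  rw [← hl, h4]
  simp
  omega

/-- For every caterpillar `T` on `n` vertices, `h(T) ≥ n/6 − 1`. -/
theorem stmt6 {V : Type*} [Fintype V] (G : SimpleGraph V) [DecidableRel G.Adj]
    (hG : IsCaterpillar G) (n : ℕ) (hn : Fintype.card V = n) :
    (n : ℝ) / 6 - 1 ≤ homNumber G := by
  classical
  obtain ⟨hT, a, b, p, hp, hleaf⟩ := hG
  -- the spine bound
  have hA : (p.length + 1) / 2 ≤ homNumber G := by
    obtain ⟨k, hk⟩ : ∃ k, k = (p.length + 1) / 2 := ⟨_, rfl⟩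
    have inj : ∀ i j, i ≤ p.length → j ≤ p.length → p.getVert i = p.getVert j → i = j :=
      fun i j hi hj h => hp.getVert_injOn hi hj h
    let f : V → V := fun v => p.getVert (p.support.idxOf v + k)
    have hf : ∀ i, i < k → f (p.getVert i) = p.getVert (i + k) := by
      intro i hi
      have hm : p.getVert i ∈ p.support := p.getVert_mem_support i
      have hl : p.support.idxOf (p.getVert i) ≤ p.length := by
        have := List.idxOf_lt_length_of_mem hm
        rw [SimpleGraph.Walk.length_support] at this
        omega
      have : p.getVert (p.support.idxOf (p.getVert i)) = p.getVert i := by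
        rw [SimpleGraph.Walk.getVert_eq_support_getElem _ hl]
        simp
      have := inj _ _ hl (by omega) this
      simp only [f, this]
    have hcard : ((Finset.range k).image p.getVert).card = k := by
      rw [Finset.card_image_of_injOn, Finset.card_range]
      intro i hi j hj h
      simp only [Finset.coe_range, Set.mem_Iio] at hi hj
      exact inj i j (by omega) (by omega) h
    rw [← hk, ← hcard]
    apply aux_le G _ f
    · intro x hx y hy hxy
      simp only [Finset.coe_image, Finset.coe_range, Set.mem_image, Set.mem_Iio] at hx hy
      obtain ⟨i, hi, rfl⟩ := hx
      obtain ⟨j, hj, rfl⟩ := hy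
      rw [hf i hi, hf j hj] at hxy
      have := inj _ _ (by omega) (by omega) hxy
      congr 1
      omega
    · rw [Finset.disjoint_left]
      intro x hx hy
      simp only [Finset.mem_image, Finset.mem_range] at hx hy
      obtain ⟨i, hi, rfl⟩ := hx
      obtain ⟨_, ⟨j, hj, rfl⟩, h⟩ := hy
      rw [hf j hj] at h
      have := inj _ _ (by omega) (by omega) h
      omega
    · intro x hx y hy _
      simp only [Finset.mem_image, Finset.mem_range] at hx hy
      obtain ⟨i, hi, rfl⟩ := hx
      obtain ⟨j, hj, rfl⟩ := hy
      rw [hf i hi, hf j hj]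
      rcases le_total i j with h | h
      · rw [aux_path G hT a b p hp _ _ h (by omega),
          aux_path G hT a b p hp (i + k) (j + k) (by omega) (by omega)]
        omega
      · rw [SimpleGraph.dist_comm, aux_path G hT a b p hp (j + k) (i + k) (by omega) (by omega),
          SimpleGraph.dist_comm, aux_path G hT a b p hp _ _ h (by omega)]
        omega
  -- the leaf bound
  have hB : n ≤ 2 * homNumber G + 2 * (p.length + 1) := by
    have : ∀ v, ∃ x, v ∉ p.support → G.degree v = 1 ∧ x ∈ p.support ∧ G.Adj v x := by
      intro v
      by_cases hv : v ∈ p.support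
      · exact ⟨v, fun h => absurd hv h⟩
      · obtain ⟨h, x, hx⟩ := hleaf v hv
        exact ⟨x, fun _ => ⟨h, hx⟩⟩
    choose g hg using this
    have hd : ∀ v w, v ∉ p.support → w ∉ p.support → v ≠ w →
        G.dist v w = G.dist (g v) (g w) + 2 := by
      intro v w hv hw hvw
      obtain ⟨v1, v2, v3⟩ := hg v hv
      obtain ⟨w1, w2, w3⟩ := hg w hw
      rw [aux_leaf G hT.connected v (g v) w v1 v3 hvw, SimpleGraph.dist_comm,
        aux_leaf G hT.connected w (g w) (g v) w1 w3 (fun h => hw (h ▸ v2)), SimpleGraph.dist_comm]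
      omega
    obtain ⟨S, f, h1, h2, h3, h4, h5, h6⟩ := aux_pair g p.support.toFinset _
      (p.support.toFinset)ᶜ rfl (by
        intro v hv
        simp only [Finset.mem_compl, List.mem_toFinset] at hv ⊢
        exact (hg v hv).2.1)
    have hS : ∀ v ∈ S, v ∉ p.support := fun v hv => by simpa using h1 hv
    have hfS : ∀ v ∈ S, f v ∉ p.support := fun v hv => by
      simpa using h2 (Finset.mem_image_of_mem f hv)
    have hle := aux_le G S f h3 h4 (by
      intro v hv w hw hvw
      rw [hd v w (hS v hv) (hS w hw) hvw,
        hd _ _ (hfS v hv) (hfS w hw) (fun h => hvw (h3 hv hw h)), h5 v hv, h5 w hw])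
    have hc : p.support.toFinset.card ≤ p.length + 1 := by
      have := p.support.toFinset_card_le
      rwa [SimpleGraph.Walk.length_support] at this
    rw [Finset.card_compl, hn] at h6
    omega
  have hfin : n ≤ 6 * homNumber G + 6 := by omega
  have : (n : ℝ) ≤ 6 * homNumber G + 6 := by exact_mod_cast hfin
  linarith
end
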